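/- arXiv:1810.01303 — 2 statements merged into one kernel-verified Lean document; each statement's English description precedes it below -/
import Mathlib

section
/- Let f and g be monic polynomials in F_q[T] with deg f ≤ n−1 and deg g ≤ n−1. Then Σ_{χ ∈ S_{n,q}} χ(f) · conj(χ(g)) equals q^n − q^{n−1} if f · T^{deg g} = g · T^{deg f} (i.e. if f/g is an integer power of T), and equals 0 otherwise. -/
open Polynomial

noncomputable section

/-- The ring `F_q[x]/(x^(n+1))`. -/
abbrev QuotR (F : Type) [Field F] (n : ℕ) : Type :=
  Polynomial F ⧸ Ideal.span {(Polynomial.X : Polynomial F) ^ (n + 1)}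

/-- The quotient map `F_q[x] → F_q[x]/(x^(n+1))`. -/
def mkR (F : Type) [Field F] (n : ℕ) : Polynomial F →+* QuotR F n :=
  Ideal.Quotient.mk _

/-- A Dirichlet character modulo `x^(n+1)` is even if it is trivial on the constants. -/
def IsEvenChar (F : Type) [Field F] (n : ℕ) (ψ : MulChar (QuotR F n) ℂ) : Prop :=
  ∀ c : F, c ≠ 0 → ψ (mkR F n (Polynomial.C c)) = 1

/-- A Dirichlet character modulo `x^(n+1)` is primitive if it is nontrivial on the
units congruent to `1` modulo `x^n` (which are exactly the `1 + a x^n`). -/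
def IsPrimitiveChar (F : Type) [Field F] (n : ℕ) (ψ : MulChar (QuotR F n) ℂ) : Prop :=
  ∃ a : F, ψ (mkR F n (1 + Polynomial.C a * Polynomial.X ^ n)) ≠ 1

/-- The function `χ` on (monic) polynomials attached to a Dirichlet character `ψ`:
`χ(f) = ψ(f(x⁻¹) x^(deg f) mod x^(n+1))`. -/
def attachedChar (F : Type) [Field F] (n : ℕ) (ψ : MulChar (QuotR F n) ℂ) :
    Polynomial F → ℂ :=
  fun f => ψ (mkR F n f.reverse)

/-- The family `S_{n,q}` of functions attached to primitive even Dirichlet characters. -/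
def Snq (F : Type) [Field F] (n : ℕ) : Set (Polynomial F → ℂ) :=
  {χ | ∃ ψ : MulChar (QuotR F n) ℂ,
    IsEvenChar F n ψ ∧ IsPrimitiveChar F n ψ ∧ χ = attachedChar F n ψ}

/-- The sum of `χ(f)` over monic polynomials of degree `d`. -/
def coeffSum (F : Type) [Field F] (χ : Polynomial F → ℂ) (d : ℕ) : ℂ :=
  ∑ᶠ f ∈ {f : Polynomial F | f.Monic ∧ f.natDegree = d}, χ f

/-- `λ_d(χ) = q^(-d/2) ∑_{f monic, deg f = d} χ(f)`. -/
def lam (F : Type) [Field F] [Fintype F] (χ : Polynomial F → ℂ) (d : ℕ) : ℂ :=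
  ((((Fintype.card F : ℝ) ^ (-(d : ℝ) / 2) : ℝ)) : ℂ) * coeffSum F χ d

/-- The epsilon factor `ε_χ = λ_{n-1}(χ)`. -/
def epsFactor (F : Type) [Field F] [Fintype F] (n : ℕ) (χ : Polynomial F → ℂ) : ℂ :=
  lam F χ (n - 1)

/-- The L-function `L(s,χ) = ∑_{d=0}^{n-1} λ_d(χ) q^(d(1/2-s))`. -/
def Lfun (F : Type) [Field F] [Fintype F] (n : ℕ) (χ : Polynomial F → ℂ) (s : ℂ) : ℂ :=
  ∑ d ∈ Finset.range n, lam F χ d * (Fintype.card F : ℂ) ^ ((d : ℂ) * (1 / 2 - s))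

/-!
Characters of a finite abelian group trivial on a subgroup `H` are the characters of the quotient by
`H`, so their values at `u` sum to the index of `H` if `u ∈ H` and to `0` otherwise. Both the even
characters modulo `x^(n+1)` and the even imprimitive ones arise in this way: the former from the
constants, of index `q^n`, the latter from the units that are constant modulo `x^n`, of index
`q^(n-1)`. The sum over primitive even characters is therefore a difference of two orthogonality
relations. It is taken at `u = f* / g*`, where `f*` and `g*` are the reversed polynomials. These
have constant coefficient `1` and degree less than `n`, so `u` is constant modulo `x^n`, or modulo
`x^(n+1)`, only if `f* = g*`, that is, if `f / g` is a power of `T`.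
-/

/-- The subgroup `F_q^×` of constants in `(F_q[x]/(x^(n+1)))^×`; a character is even if and only
if it is trivial on it. -/
def constUnits (F : Type) [Field F] (n : ℕ) : Subgroup (QuotR F n)ˣ :=
  (Units.map ((mkR F n).comp C : F →* QuotR F n)).range

/-- The constant coefficient `F_q[x]/(x^(n+1)) → F_q`. -/
def constCoeff (F : Type) [Field F] (n : ℕ) : QuotR F n →+* F :=
  Ideal.Quotient.lift _ constantCoeff fun f hf ↦ by
    rw [Ideal.mem_span_singleton, X_pow_dvd_iff] at hf
    exact hf 0 n.succ_pos

/-- The reduction `F_q[x]/(x^(n+2)) → F_q[x]/(x^(n+1))`; the imprimitive characters modulo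
`x^(n+2)` are those trivial on the kernel of the map it induces on units. -/
def reduction (F : Type) [Field F] (n : ℕ) : QuotR F (n + 1) →+* QuotR F n :=
  Ideal.Quotient.factor <|
    Ideal.span_singleton_le_span_singleton.2 (pow_dvd_pow X (n + 1).le_succ)

/-- The units of `F_q[x]/(x^(n+2))` that are constant modulo `x^(n+1)`; an even character is
imprimitive if and only if it is trivial on them. -/
def constModUnits (F : Type) [Field F] (n : ℕ) : Subgroup (QuotR F (n + 1))ˣ :=
  (constUnits F n).comap (Units.map (reduction F n : QuotR F (n + 1) →* QuotR F n))

section Groups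

theorem index_range_eq_card_ker {G K : Type*} [Group G] [Group K] {s : K →* G} {π : G →* K}
    (h : Function.LeftInverse π s) : s.range.index = Nat.card π.ker := by
  refine Subgroup.IsComplement'.index_eq_card
    (Subgroup.isComplement'_of_disjoint_and_mul_eq_univ ?_ ?_)
  · rw [Subgroup.disjoint_def]
    rintro _ hk ⟨k, rfl⟩
    rw [MonoidHom.mem_ker, h k] at hk
    rw [hk, map_one]
  · refine Set.eq_univ_of_forall fun g ↦ Set.mem_mul.2
      ⟨g * (s (π g))⁻¹, ?_, s (π g), ⟨π g, rfl⟩, inv_mul_cancel_right _ _⟩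
    rw [SetLike.mem_coe, MonoidHom.mem_ker, map_mul, map_inv, h, mul_inv_cancel]

theorem card_ker_units_map {R S : Type*} [Ring R] [Ring S] (φ : R →+* S) [IsLocalHom φ] :
    Nat.card (Units.map (φ : R →* S)).ker = Nat.card (RingHom.ker φ) := by
  refine Nat.card_congr (Equiv.ofBijective
    (fun u ↦ ⟨(u : Rˣ) - 1, ?_⟩) ⟨fun u v huv ↦ ?_, fun r ↦ ?_⟩)
  · have hu : φ (u : Rˣ) = 1 := congrArg Units.val u.2
    rw [RingHom.mem_ker, map_sub, hu, map_one, sub_self]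
  · exact Subtype.ext (Units.ext (sub_left_injective (congrArg Subtype.val huv)))
  · have hr : φ (r + 1) = 1 := by rw [map_add, RingHom.mem_ker.1 r.2, map_one, zero_add]
    obtain ⟨u, hu⟩ := isUnit_of_map_unit φ (r + 1 : R) (hr ▸ isUnit_one)
    exact ⟨⟨u, Units.ext (by simpa [hu] using hr)⟩, Subtype.ext (by simp [hu])⟩

theorem card_ker_mul_card_of_surjective {R S : Type*} [Ring R] [Ring S] {φ : R →+* S}
    (hφ : Function.Surjective φ) : Nat.card (RingHom.ker φ) * Nat.card S = Nat.card R := by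
  have hindex : φ.toAddMonoidHom.ker.index = Nat.card S := by
    rw [AddSubgroup.index_ker, AddMonoidHom.range_eq_top.2 hφ, AddSubgroup.card_top]
  rw [← hindex]
  exact φ.toAddMonoidHom.ker.card_mul_index

open MulChar (subgroupOrderIsoSubgroupMulChar)

open Classical in
theorem finsum_mem_subgroupOrderIsoSubgroupMulChar {M R : Type*} [CommMonoid M] [Finite M]
    [CommRing R] [IsDomain R] [HasEnoughRootsOfUnity R (Monoid.exponent Mˣ)]
    (H : Subgroup Mˣ) (u : Mˣ) :
    ∑ᶠ ψ ∈ (subgroupOrderIsoSubgroupMulChar M R H).ofDual, ψ u =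
      if u ∈ H then (H.index : R) else 0 := by
  set D := (subgroupOrderIsoSubgroupMulChar M R H).ofDual with hD
  have : Fintype D := Fintype.ofFinite D
  let evalAt : D →* R :=
    ((MulChar.mulCharEquiv M R).symm u).toMonoidHom.comp D.subtype
  have evalAt_apply (ψ : D) : evalAt ψ = (ψ : MulChar M R) u :=
    MulChar.mulCharEquiv_symm_apply_apply u _
  have evalAt_eq_one : evalAt = 1 ↔ u ∈ H := by
    have hH : (subgroupOrderIsoSubgroupMulChar M R).symm (OrderDual.toDual D) = H := by
      simp [hD]
    rw [← hH, MulChar.mem_subgroupOrderIsoSubgroupMulChar_symm_iff]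
    simp [MonoidHom.ext_iff, evalAt_apply]
  have card_D : Fintype.card D = H.index := by
    rw [← Nat.card_eq_fintype_card, MulChar.card_subgroupOrderIsoSubgroupMulChar,
      Subgroup.index_eq_card]
  calc ∑ᶠ ψ ∈ D, ψ u = ∑ ψ : D, evalAt ψ := by
        simp only [evalAt_apply]
        rw [← finsum_eq_sum_of_fintype]
        exact (finsum_set_coe_eq_finsum_mem (D : Set (MulChar M R))).symm
    _ = if u ∈ H then (H.index : R) else 0 := by
        rw [sum_hom_units, card_D]
        simp only [evalAt_eq_one]
        split_ifs <;> simp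

end Groups

section Reverse

theorem mul_X_pow_eq_mul_X_pow_iff_reverse_eq {R : Type*} [CommSemiring R] (f g : R[X]) :
    f * X ^ g.natDegree = g * X ^ f.natDegree ↔ f.reverse = g.reverse := by
  have mul_X_pow_eq_reflect (f : R[X]) (k : ℕ) :
      f * X ^ k = reflect (f.natDegree + k) f.reverse := by
    conv_rhs => rw [← mul_one f.reverse, ← C_1, reflect_mul _ _ (reverse_natDegree_le f)
      ((natDegree_C 1).trans_le k.zero_le), reverse, reflect_reflect, reflect_C, C_1, one_mul]
  refine ⟨fun h ↦ ?_, fun h ↦ ?_⟩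
  · simpa only [reverse_mul_X_pow] using congrArg reverse h
  · rw [mul_X_pow_eq_reflect, mul_X_pow_eq_reflect, h, add_comm]

theorem reverse_reverse_of_coeff_zero_ne_zero {R : Type*} [Semiring R] {f : R[X]}
    (hf : f.coeff 0 ≠ 0) : f.reverse.reverse = f := by
  have hdeg : f.reverse.natDegree = f.natDegree := by
    rw [reverse_natDegree, natTrailingDegree_eq_zero.2 (Or.inr hf), Nat.sub_zero]
  rw [reverse, hdeg, reverse, reflect_reflect]

end Reverse

section QuotientRing

variable {F : Type} [Field F] {n : ℕ}

theorem mkR_surjective : Function.Surjective (mkR F n) :=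
  Ideal.Quotient.mk_surjective

theorem mkR_eq_mkR_iff {f g : F[X]} : mkR F n f = mkR F n g ↔ ∀ d ≤ n, f.coeff d = g.coeff d := by
  rw [mkR, Ideal.Quotient.mk_eq_mk_iff_sub_mem, Ideal.mem_span_singleton, X_pow_dvd_iff]
  simp only [Nat.lt_succ_iff, coeff_sub, sub_eq_zero]

theorem mkR_X_pow_succ : mkR F n (X ^ (n + 1)) = 0 :=
  Ideal.Quotient.mk_singleton_self _

theorem constCoeff_mkR (f : F[X]) : constCoeff F n (mkR F n f) = f.coeff 0 :=
  rfl

theorem reduction_mkR (f : F[X]) : reduction F n (mkR F (n + 1) f) = mkR F n f :=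
  rfl

theorem isUnit_mkR_iff {f : F[X]} : IsUnit (mkR F n f) ↔ f.coeff 0 ≠ 0 := by
  refine ⟨fun h ↦ constCoeff_mkR (n := n) f ▸ (h.map (constCoeff F n)).ne_zero, fun h ↦ ?_⟩
  have hcop : IsCoprime (X ^ (n + 1)) f :=
    (irreducible_X.coprime_iff_not_dvd.2 (mt X_dvd_iff.1 h)).pow_left
  simpa only [mkR_X_pow_succ, isCoprime_zero_left] using hcop.map (mkR F n)

instance : IsLocalHom (constCoeff F n) where
  map_nonunit r hr := by
    obtain ⟨f, rfl⟩ := mkR_surjective r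
    exact isUnit_mkR_iff.2 hr.ne_zero

instance : IsLocalHom (reduction F n) where
  map_nonunit r hr := by
    obtain ⟨f, rfl⟩ := mkR_surjective r
    exact isUnit_mkR_iff.2 (isUnit_mkR_iff.1 hr)

instance : Module.Finite F (QuotR F n) :=
  (monic_X_pow (n + 1)).finite_quotient

instance [Finite F] : Finite (QuotR F n) :=
  Module.finite_of_finite F

theorem card_quotR : Nat.card (QuotR F n) = Nat.card F ^ (n + 1) := by
  rw [Module.natCard_eq_pow_finrank (K := F), finrank_quotient_span_eq_natDegree, natDegree_X_pow]

theorem card_ker_constCoeff [Finite F] :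
    Nat.card (RingHom.ker (constCoeff F n)) = Nat.card F ^ n := by
  have hsurj : Function.Surjective (constCoeff F n) := fun c ↦
    ⟨mkR F n (C c), by rw [constCoeff_mkR, coeff_C_zero]⟩
  exact Nat.eq_of_mul_eq_mul_right Nat.card_pos <|
    (card_ker_mul_card_of_surjective hsurj).trans (card_quotR.trans (pow_succ _ _))

theorem mem_constUnits_iff {u : (QuotR F n)ˣ} :
    u ∈ constUnits F n ↔ ∃ c : F, c ≠ 0 ∧ mkR F n (C c) = u := by
  refine ⟨?_, ?_⟩
  · rintro ⟨c, rfl⟩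
    exact ⟨c, c.ne_zero, rfl⟩
  · rintro ⟨c, hc, hu⟩
    exact ⟨Units.mk0 c hc, Units.ext hu⟩

theorem index_constUnits [Finite F] : (constUnits F n).index = Nat.card F ^ n := by
  have hinv : Function.LeftInverse (Units.map (constCoeff F n : QuotR F n →* F))
      (Units.map ((mkR F n).comp C : F →* QuotR F n)) :=
    fun c ↦ Units.ext (coeff_C_zero (a := (c : F)))
  rw [constUnits, index_range_eq_card_ker hinv, card_ker_units_map, card_ker_constCoeff]

theorem div_mem_constUnits_iff {f g : F[X]} (hf : f.coeff 0 = 1) (hg : g.coeff 0 = 1)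
    (hdf : f.natDegree ≤ n) (hdg : g.natDegree ≤ n) {u v : (QuotR F n)ˣ}
    (hu : mkR F n f = u) (hv : mkR F n g = v) : u / v ∈ constUnits F n ↔ f = g := by
  refine ⟨fun h ↦ ?_, ?_⟩
  · obtain ⟨c, -, hc⟩ := mem_constUnits_iff.1 h
    have hmk : mkR F n (C c * g) = mkR F n f := by
      rw [map_mul, hc, hv, hu, ← Units.val_mul, div_mul_cancel]
    have hcoeff : ∀ d ≤ n, c * g.coeff d = f.coeff d := by
      simpa only [coeff_C_mul] using mkR_eq_mkR_iff.1 hmk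
    have hc1 : c = 1 := by simpa only [hf, hg, mul_one] using hcoeff 0 n.zero_le
    ext d
    rcases le_or_gt d n with hd | hd
    · rw [← hcoeff d hd, hc1, one_mul]
    · rw [coeff_eq_zero_of_natDegree_lt (hdf.trans_lt hd),
        coeff_eq_zero_of_natDegree_lt (hdg.trans_lt hd)]
  · rintro rfl
    rw [Units.ext (hu.symm.trans hv), div_self']
    exact one_mem _

theorem index_constModUnits [Finite F] : (constModUnits F n).index = Nat.card F ^ n := by
  have hsurj : Function.Surjective (Units.map (reduction F n : QuotR F (n + 1) →* QuotR F n)) :=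
    IsLocalRing.surjective_units_map_of_local_ringHom (reduction F n)
      (Ideal.Quotient.factor_surjective _) inferInstance
  rw [constModUnits, Subgroup.index_comap_of_surjective _ hsurj, index_constUnits]

theorem div_mem_constModUnits_iff {f g : F[X]} (hf : f.coeff 0 = 1) (hg : g.coeff 0 = 1)
    (hdf : f.natDegree ≤ n) (hdg : g.natDegree ≤ n) {u v : (QuotR F (n + 1))ˣ}
    (hu : mkR F (n + 1) f = u) (hv : mkR F (n + 1) g = v) :
    u / v ∈ constModUnits F n ↔ f = g := by
  rw [constModUnits, Subgroup.mem_comap, _root_.map_div]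
  exact div_mem_constUnits_iff hf hg hdf hdg
    (congrArg (reduction F n) hu) (congrArg (reduction F n) hv)

theorem mem_constModUnits_iff {u : (QuotR F (n + 1))ˣ} :
    u ∈ constModUnits F n ↔
      ∃ c a : F, c ≠ 0 ∧ mkR F (n + 1) (C c * (1 + C a * X ^ (n + 1))) = u := by
  rw [constModUnits, Subgroup.mem_comap, mem_constUnits_iff]
  refine ⟨?_, ?_⟩
  · rintro ⟨c, hc, hu⟩
    obtain ⟨f, hf⟩ := mkR_surjective (u : QuotR F (n + 1))
    replace hu : mkR F n (C c) = mkR F n f := by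
      rw [hu, ← reduction_mkR, hf]
      rfl
    refine ⟨c, c⁻¹ * f.coeff (n + 1), hc, hf ▸ mkR_eq_mkR_iff.2 fun d hd ↦ ?_⟩
    have hrw : C c * (1 + C (c⁻¹ * f.coeff (n + 1)) * X ^ (n + 1)) =
        C c + C (f.coeff (n + 1)) * X ^ (n + 1) := by
      rw [mul_add, mul_one, ← mul_assoc, ← C_mul, mul_inv_cancel_left₀ hc]
    rw [hrw, coeff_add, coeff_C_mul_X_pow]
    rcases hd.eq_or_lt with rfl | hlt
    · simp
    · simp [hlt.ne, mkR_eq_mkR_iff.1 hu d (Nat.lt_succ_iff.1 hlt)]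
  · rintro ⟨c, a, hc, hu⟩
    refine ⟨c, hc, ?_⟩
    calc mkR F n (C c) = reduction F n (mkR F (n + 1) (C c * (1 + C a * X ^ (n + 1)))) := by
          simp only [reduction_mkR, map_mul, map_add, map_one, mkR_X_pow_succ, mul_zero, add_zero,
            mul_one]
      _ = reduction F n u := by rw [hu]

end QuotientRing

section Characters

open MulChar (subgroupOrderIsoSubgroupMulChar)

variable {F : Type} [Field F] {n : ℕ}

theorem attachedChar_injective : Function.Injective (attachedChar F n) := by
  intro ψ φ h
  refine MulChar.ext fun u ↦ ?_
  obtain ⟨f, hf⟩ := mkR_surjective (u : QuotR F n)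
  have hf0 : f.coeff 0 ≠ 0 := isUnit_mkR_iff.1 (hf ▸ u.isUnit)
  simpa only [attachedChar, reverse_reverse_of_coeff_zero_ne_zero hf0, hf] using
    congrFun h f.reverse

theorem Snq_eq_image :
    Snq F n = attachedChar F n '' {ψ | IsEvenChar F n ψ ∧ IsPrimitiveChar F n ψ} := by
  ext χ
  simp only [Snq, Set.mem_image, Set.mem_ofPred_eq, and_assoc, eq_comm]

variable [Finite F]

theorem attachedChar_mul_conj (ψ : MulChar (QuotR F n) ℂ) {f g : F[X]} {u v : (QuotR F n)ˣ}
    (hu : mkR F n f.reverse = u) (hv : mkR F n g.reverse = v) :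
    attachedChar F n ψ f * (starRingEnd ℂ) (attachedChar F n ψ g) = ψ (u / v : (QuotR F n)ˣ) := by
  rw [attachedChar, attachedChar, hu, hv, starRingEnd_apply, MulChar.star_apply',
    MulChar.inv_apply, Ring.inverse_unit, ← map_mul, ← Units.val_mul, div_eq_mul_inv]

theorem isEvenChar_iff_mem {ψ : MulChar (QuotR F n) ℂ} : IsEvenChar F n ψ ↔
    ψ ∈ (subgroupOrderIsoSubgroupMulChar _ ℂ (constUnits F n)).ofDual := by
  rw [MulChar.mem_subgroupOrderIsoSubgroupMulChar_iff]
  refine ⟨fun h u hu ↦ ?_, fun h c hc ↦ h _ ⟨Units.mk0 c hc, rfl⟩⟩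
  obtain ⟨c, hc, hu⟩ := mem_constUnits_iff.1 hu
  rw [← hu, h c hc]

theorem isEvenChar_and_not_isPrimitiveChar_iff_mem {ψ : MulChar (QuotR F (n + 1)) ℂ} :
    IsEvenChar F (n + 1) ψ ∧ ¬ IsPrimitiveChar F (n + 1) ψ ↔
      ψ ∈ (subgroupOrderIsoSubgroupMulChar _ ℂ (constModUnits F n)).ofDual := by
  rw [MulChar.mem_subgroupOrderIsoSubgroupMulChar_iff, IsPrimitiveChar, not_exists_not]
  refine ⟨fun ⟨heven, himprim⟩ u hu ↦ ?_, fun h ↦ ?_⟩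
  · obtain ⟨c, a, hc, hu⟩ := mem_constModUnits_iff.1 hu
    rw [← hu, map_mul, map_mul, heven c hc, himprim a, one_mul]
  · have hψ (c a : F) (hc : c ≠ 0) : ψ (mkR F (n + 1) (C c * (1 + C a * X ^ (n + 1)))) = 1 := by
      have hunit : IsUnit (mkR F (n + 1) (C c * (1 + C a * X ^ (n + 1)))) :=
        isUnit_mkR_iff.2 (by simpa [coeff_X_pow] using hc)
      exact h hunit.unit (mem_constModUnits_iff.2 ⟨c, a, hc, rfl⟩)
    exact ⟨fun c hc ↦ by simpa using hψ c 0 hc, fun a ↦ by simpa using hψ 1 a one_ne_zero⟩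

open Classical in
theorem finsum_isEvenChar_isPrimitiveChar_apply (u : (QuotR F (n + 1))ˣ) :
    ∑ᶠ ψ ∈ {ψ | IsEvenChar F (n + 1) ψ ∧ IsPrimitiveChar F (n + 1) ψ}, ψ u =
      (if u ∈ constUnits F (n + 1) then (Nat.card F : ℂ) ^ (n + 1) else 0) -
        if u ∈ constModUnits F n then (Nat.card F : ℂ) ^ n else 0 := by
  have heven := finsum_mem_subgroupOrderIsoSubgroupMulChar (R := ℂ) (constUnits F (n + 1)) u
  have himprim := finsum_mem_subgroupOrderIsoSubgroupMulChar (R := ℂ) (constModUnits F n) u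
  simp only [← isEvenChar_iff_mem, index_constUnits, Nat.cast_pow] at heven
  simp only [← isEvenChar_and_not_isPrimitiveChar_iff_mem, index_constModUnits,
    Nat.cast_pow] at himprim
  rw [← heven, ← himprim, eq_sub_iff_add_eq]
  exact finsum_mem_inter_add_sdiff {ψ | IsPrimitiveChar F (n + 1) ψ} (Set.toFinite _)

open Classical in
theorem finsum_mem_Snq_mul_conj {f g : F[X]} (hf : f.Monic) (hg : g.Monic)
    (hdf : f.natDegree ≤ n) (hdg : g.natDegree ≤ n) :
    ∑ᶠ χ ∈ Snq F (n + 1), χ f * (starRingEnd ℂ) (χ g) =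
      if f.reverse = g.reverse then (Nat.card F : ℂ) ^ (n + 1) - (Nat.card F : ℂ) ^ n else 0 := by
  have coeff_zero {h : F[X]} (hh : h.Monic) : h.reverse.coeff 0 = 1 :=
    (coeff_zero_reverse h).trans hh
  have isUnit_mkR_reverse {h : F[X]} (hh : h.Monic) : IsUnit (mkR F (n + 1) h.reverse) :=
    isUnit_mkR_iff.2 (by simp [coeff_zero hh])
  obtain ⟨u, hu⟩ := isUnit_mkR_reverse hf
  obtain ⟨v, hv⟩ := isUnit_mkR_reverse hg
  replace hdf := (reverse_natDegree_le f).trans hdf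
  replace hdg := (reverse_natDegree_le g).trans hdg
  have hdiv := div_mem_constUnits_iff (coeff_zero hf) (coeff_zero hg)
    (hdf.trans n.le_succ) (hdg.trans n.le_succ) hu.symm hv.symm
  have hdivMod := div_mem_constModUnits_iff (coeff_zero hf) (coeff_zero hg) hdf hdg hu.symm hv.symm
  rw [Snq_eq_image, finsum_mem_image attachedChar_injective.injOn]
  simp only [attachedChar_mul_conj _ hu.symm hv.symm, finsum_isEvenChar_isPrimitiveChar_apply,
    hdiv, hdivMod]
  split_ifs <;> simp

end Characters

/-- orthogonality: for monic `f, g` of degree `≤ n-1`,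
`∑_{χ ∈ S_{n,q}} χ(f) conj(χ(g))` is `q^n - q^(n-1)` when `f/g` is an integer power
of `T` (i.e. `f T^(deg g) = g T^(deg f)`), and `0` otherwise. -/
theorem statement2 (p : ℕ) (hp : p.Prime) (F : Type) [Field F] [Fintype F] (hchar : CharP F p)
    (n : ℕ) (hn : 1 ≤ n) (f g : Polynomial F) (hf : f.Monic) (hg : g.Monic)
    (hdf : f.natDegree ≤ n - 1) (hdg : g.natDegree ≤ n - 1) :
    (f * Polynomial.X ^ g.natDegree = g * Polynomial.X ^ f.natDegree →
      (∑ᶠ χ ∈ Snq F n, χ f * (starRingEnd ℂ) (χ g)) =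
        (Fintype.card F : ℂ) ^ n - (Fintype.card F : ℂ) ^ (n - 1)) ∧
    (f * Polynomial.X ^ g.natDegree ≠ g * Polynomial.X ^ f.natDegree →
      (∑ᶠ χ ∈ Snq F n, χ f * (starRingEnd ℂ) (χ g)) = 0) := by
  obtain ⟨m, rfl⟩ := Nat.exists_eq_add_of_le' hn
  rw [mul_X_pow_eq_mul_X_pow_iff_reverse_eq, ne_eq, mul_X_pow_eq_mul_X_pow_iff_reverse_eq,
    finsum_mem_Snq_mul_conj (n := m) hf hg hdf hdg, Nat.card_eq_fintype_card]
  exact ⟨fun h ↦ if_pos h, fun h ↦ if_neg h⟩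

end
end

section
/- There exist constants C > 0 and K > 0 depending only on k such that the following holds for every prime power q ≥ 2, every subset S of {1,…,k} with S and S^c nonempty, and every d ∈ ℤ^k with Σ_{i∈S} d_i − Σ_{i∉S} d_i ≥ 0: |b(d)| ≤ C · (1 + Σ_{i∈S} d_i − Σ_{i∉S} d_i)^K · min( q^{(−max_{i∈S} d_i + min_{i∉S} d_i)/2}, q^{−(Σ_{i∈S} d_i)/2}, q^{(Σ_{i∉S} d_i)/2}, q^{−|Σ_{i∈S} d_i + Σ_{i∉S} d_i|/2} ). (Moreover b(d) = 0 when Σ_{i∈S} d_i − Σ_{i∉S} d_i < 0.) -/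
/-!
Let `q` be the cardinality of `F`. The generating series of the numbers `N_S(d)`, in variables `x_i`
recording the degrees, is an Euler product over the monic irreducible polynomials `P`: the exponents
of `P` in the `f_i` are arbitrary for `P = T`, and have equal sums over `S` and `Sᶜ` otherwise. By
the Euler product `1 - q u = ∏_P (1 - u^(deg P))`, multiplying the series by
`∏_{i ∈ S, j ∉ S} (1 - q x_i x_j)` replaces each Euler factor by its product with
`∏_{i ∈ S, j ∉ S} (1 - x_i^(deg P) x_j^(deg P))`.

For `P ≠ T` only finitely many monomials survive in this product. An exponent `a ≠ 0` cannot be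
concentrated at a single vertex of `S` (or of `Sᶜ`), because the coefficient of `x^a` is a signed
count of bipartite graphs with degrees bounded by `a`, and toggling an edge at a vertex `j` cancels
this sum as soon as `a_j` is large. Hence `∑_{i ∈ U} a_i ≥ 2` for `U = S`, for `U = Sᶜ`, and for `U`
the complement of a pair `{i, j}` with `i ∈ S` and `j ∉ S`.

The product over `P ≠ T` is then dominated by a finite product of the series
`∏_P (1 + x^(deg P • a))`, whose coefficient at `x^(t • a)` is at most
`q^t ≤ q^((∑_{i ∈ U} t a_i) / 2)`. This bounds the coefficient of `x^n` in the twisted series by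
`q^((∑_{i ∈ U} n_i) / 2)` up to a polynomial factor, and the three choices of `U` give the theorem.
-/

open Polynomial

noncomputable section

/-- `N_S(d)`: the number of `k`-tuples of monic polynomials over `F_q` with
`deg f_i = d_i` for `i ∈ S`, `deg f_i = -d_i` for `i ∉ S`, such that
`T^a ∏_{i∈S} f_i = T^b ∏_{i∉S} f_i` for some naturals `a, b`. -/
def NS (F : Type) [Field F] {k : ℕ} (S : Finset (Fin k)) (d : Fin k → ℤ) : ℕ :=
  Set.ncard {f : Fin k → Polynomial F |
    (∀ i, (f i).Monic) ∧
    (∀ i ∈ S, ((f i).natDegree : ℤ) = d i) ∧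
    (∀ i ∉ S, ((f i).natDegree : ℤ) = -d i) ∧
    ∃ a b : ℕ, Polynomial.X ^ a * ∏ i ∈ S, f i = Polynomial.X ^ b * ∏ i ∈ Sᶜ, f i}

/-- `w(d) = q^{-(∑_{i∈S} d_i - ∑_{i∉S} d_i)/2} N_S(d)`, the coefficient of
`∏ q^{α_i d_i}` in the diagonal sum. -/
def wS (F : Type) [Field F] [Fintype F] {k : ℕ} (S : Finset (Fin k)) (d : Fin k → ℤ) : ℝ :=
  (Fintype.card F : ℝ) ^ ((-((((∑ i ∈ S, d i) - ∑ i ∈ Sᶜ, d i : ℤ)) : ℝ)) / 2) * NS F S d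

/-- `c_S(d)`: the coefficient of `∏ q^{α_i d_i}` in `M_S`, i.e. in the Vandermonde
determinant times the diagonal sum. -/
def cS (F : Type) [Field F] [Fintype F] {k : ℕ} (S : Finset (Fin k)) (d : Fin k → ℤ) : ℝ :=
  (-1 : ℝ) ^ (k * (k - 1) / 2) *
    ∑ σ : Equiv.Perm (Fin k), ((Equiv.Perm.sign σ : ℤ) : ℝ) *
      wS F S (fun i => d i - ((σ i : ℕ) : ℤ))

/-- `v_J` for `J ⊆ S × Sᶜ`. -/
def vJ {k : ℕ} (S : Finset (Fin k)) (J : Finset (Fin k × Fin k)) (i : Fin k) : ℤ :=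
  if i ∈ S then ((J.filter fun p => p.1 = i).card : ℤ)
  else -(((J.filter fun p => p.2 = i).card : ℤ))

/-- `b(d) = ∑_{J ⊆ S×Sᶜ} (-1)^{|J|} w(d - v_J)`, the coefficient of `∏ q^{α_i d_i}`
in `∏_{i∈S, i'∈Sᶜ} (1 - q^{α_i - α_{i'}})` times the diagonal sum. -/
def bS (F : Type) [Field F] [Fintype F] {k : ℕ} (S : Finset (Fin k)) (d : Fin k → ℤ) : ℝ :=
  ∑ J ∈ (S ×ˢ Sᶜ).powerset, (-1 : ℝ) ^ J.card * wS F S (fun i => d i - vJ S J i)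

section MonicPrime

variable {F : Type*} [Field F] {σ : Type*}

/-- The monic irreducible polynomials over `F`, which index Euler products. -/
abbrev MonicPrime (F : Type*) [Field F] := {P : F[X] // P.Monic ∧ Irreducible P}

namespace MonicPrime

lemma natDegree_ne_zero (P : MonicPrime F) : P.1.natDegree ≠ 0 := P.2.2.natDegree_pos.ne'

variable (F) in
lemma finite_setOf_natDegree_le [Finite F] (M : ℕ) :
    {P : MonicPrime F | P.1.natDegree ≤ M}.Finite := by
  have : Finite (degreeLT F (M + 1)) := .of_equiv _ (degreeLTEquiv F (M + 1)).symm.toEquiv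
  refine ((degreeLT F (M + 1) : Set F[X]).toFinite.preimage Subtype.val_injective.injOn).subset ?_
  intro P hP
  exact mem_degreeLT.2 (degree_le_natDegree.trans_lt (by exact_mod_cast Nat.lt_succ_of_le hP))

variable (F) in
/-- The finitely many monic irreducible polynomials of degree at most `M`; truncating Euler products
to them does not change the coefficients in degrees at most `M`. -/
def ofDegreeLE [Finite F] (M : ℕ) : Finset (MonicPrime F) :=
  (finite_setOf_natDegree_le F M).toFinset

lemma mem_ofDegreeLE [Finite F] {M : ℕ} {P : MonicPrime F} :
    P ∈ ofDegreeLE F M ↔ P.1.natDegree ≤ M := by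
  simp [ofDegreeLE]

variable (F) in
/-- The prime `T`, which plays a special role in the diagonal condition. -/
def primeX : MonicPrime F := ⟨X, monic_X, irreducible_X⟩

open scoped Classical in
/-- The exponent of the prime `P` in the factorization of `f` (zero for `f = 0`). -/
def exponent (P : MonicPrime F) (f : F[X]) : ℕ := factorization f P.1

open scoped Classical in
lemma exponent_mul (P : MonicPrime F) {f g : F[X]} (hf : f ≠ 0) (hg : g ≠ 0) :
    P.exponent (f * g) = P.exponent f + P.exponent g := by
  simp [exponent, factorization_mul hf hg]

open scoped Classical in
lemma exponent_pow (P : MonicPrime F) (f : F[X]) (n : ℕ) :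
    P.exponent (f ^ n) = n * P.exponent f := by
  simp [exponent, factorization_pow]

lemma exponent_prod (P : MonicPrime F) {s : Finset σ} {f : σ → F[X]} (hf : ∀ i ∈ s, f i ≠ 0) :
    P.exponent (∏ i ∈ s, f i) = ∑ i ∈ s, P.exponent (f i) := by
  classical
  induction s using Finset.induction_on with
  | empty => simp [exponent]
  | insert a s ha ih =>
    rw [Finset.forall_mem_insert] at hf
    rw [Finset.prod_insert ha, Finset.sum_insert ha,
      P.exponent_mul hf.1 (Finset.prod_ne_zero_iff.2 hf.2), ih hf.2]

open scoped Classical in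
lemma exponent_coe (P Q : MonicPrime F) : P.exponent Q.1 = if P = Q then 1 else 0 := by
  simp [exponent, factorization_eq_count, UniqueFactorizationMonoid.normalizedFactors_irreducible
    Q.2.2, Q.2.1.normalize_eq_self, Multiset.count_singleton, Subtype.ext_iff]

lemma exponent_prod_pow {t : Finset (MonicPrime F)} (e : MonicPrime F → ℕ) (P : MonicPrime F)
    (he : P ∉ t → e P = 0) : P.exponent (∏ Q ∈ t, Q.1 ^ e Q) = e P := by
  classical
  rw [exponent_prod _ fun Q _ => pow_ne_zero _ Q.2.2.ne_zero]
  simpa [exponent_pow, exponent_coe] using fun h => (he h).symm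

lemma prod_pow_exponent {f : F[X]} (hf : f.Monic) {t : Finset (MonicPrime F)}
    (ht : ∀ P ∉ t, P.exponent f = 0) : ∏ P ∈ t, P.1 ^ P.exponent f = f := by
  classical
  have hfac (p : F[X]) (hp : p ∈ UniqueFactorizationMonoid.normalizedFactors f) :
      ∃ P ∈ t, P.1 = p := by
    have hirr := UniqueFactorizationMonoid.irreducible_of_normalized_factor p hp
    have hmonic : p.Monic :=
      UniqueFactorizationMonoid.normalize_normalized_factor p hp ▸ monic_normalize hirr.ne_zero
    refine ⟨⟨p, hmonic, hirr⟩, ?_, rfl⟩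
    by_contra hP
    have := ht _ hP
    rw [exponent, factorization_eq_count, Multiset.count_eq_zero] at this
    exact this hp
  have hprod := UniqueFactorizationMonoid.prod_normalizedFactors_eq hf.ne_zero
  rw [hf.normalize_eq_self, Finset.prod_multiset_count_of_subset _ (t.image Subtype.val)
    fun p hp => Finset.mem_image.2 (hfac p (Multiset.mem_toFinset.1 hp)),
    Finset.prod_image Subtype.val_injective.injOn] at hprod
  simpa only [exponent, factorization_eq_count] using hprod

lemma monic_prod_pow (t : Finset (MonicPrime F)) (e : MonicPrime F → ℕ) :
    (∏ P ∈ t, P.1 ^ e P).Monic :=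
  monic_prod_of_monic _ _ fun P _ => P.2.1.pow _

lemma natDegree_prod_pow (t : Finset (MonicPrime F)) (e : MonicPrime F → ℕ) :
    (∏ P ∈ t, P.1 ^ e P).natDegree = ∑ P ∈ t, P.1.natDegree * e P := by
  rw [natDegree_prod_of_monic _ _ fun P _ => P.2.1.pow _]
  exact Finset.sum_congr rfl fun P _ => by rw [natDegree_pow, mul_comm]

lemma exponent_eq_zero_of_natDegree_lt {P : MonicPrime F} {f : F[X]} (hf : f.Monic)
    (h : f.natDegree < P.1.natDegree) : P.exponent f = 0 := by
  classical
  rw [exponent, factorization_eq_count, Multiset.count_eq_zero]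
  exact fun hP => h.not_ge (natDegree_le_of_dvd
    (UniqueFactorizationMonoid.dvd_of_mem_normalizedFactors hP) hf.ne_zero)

lemma ext_exponent [Finite F] {f g : F[X]} (hf : f.Monic) (hg : g.Monic)
    (h : ∀ P : MonicPrime F, P.exponent f = P.exponent g) : f = g := by
  have hprod {f : F[X]} (hf : f.Monic) {M : ℕ} (hM : f.natDegree ≤ M) :
      ∏ P ∈ ofDegreeLE F M, P.1 ^ P.exponent f = f :=
    prod_pow_exponent hf fun P hP => exponent_eq_zero_of_natDegree_lt hf
      (hM.trans_lt (not_le.1 (mt mem_ofDegreeLE.2 hP)))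
  have hf' := hprod hf (le_max_left f.natDegree g.natDegree)
  simp only [h] at hf'
  exact hf'.symm.trans (hprod hg (le_max_right _ _))

/-- The exponents of `P` in the members of a finite tuple of polynomials. -/
def exponents [Finite σ] (P : MonicPrime F) (f : σ → F[X]) : σ →₀ ℕ :=
  Finsupp.equivFunOnFinite.symm fun i => P.exponent (f i)

@[simp]
lemma exponents_apply [Finite σ] (P : MonicPrime F) (f : σ → F[X]) (i : σ) :
    P.exponents f i = P.exponent (f i) := rfl

end MonicPrime

end MonicPrime

section EulerProduct

variable {F : Type*} [Field F] {σ : Type*}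

open scoped Classical in
/-- The series `∑_{a ∈ A} x^a`. -/
def indicatorSeries (A : Set (σ →₀ ℕ)) : MvPowerSeries σ ℝ := fun a => if a ∈ A then 1 else 0

open scoped Classical in
lemma coeff_indicatorSeries (A : Set (σ →₀ ℕ)) (n : σ →₀ ℕ) :
    MvPowerSeries.coeff n (indicatorSeries A) = if n ∈ A then 1 else 0 := rfl

variable [Finite σ]

open scoped Classical in
lemma coeff_expand_indicatorSeries (A : Set (σ →₀ ℕ)) {p : ℕ} (hp : p ≠ 0) (n : σ →₀ ℕ) :
    MvPowerSeries.coeff n ((indicatorSeries A).expand p hp) =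
      if ∃ a ∈ A, p • a = n then 1 else 0 := by
  by_cases hdvd : ∀ i, p ∣ n i
  · choose a ha using hdvd
    obtain rfl : n = p • Finsupp.equivFunOnFinite.symm a := by ext i; simp [ha i]
    simp [coeff_indicatorSeries, MvPowerSeries.coeff_expand_smul, smul_right_inj hp]
  · push Not at hdvd
    obtain ⟨i, hi⟩ := hdvd
    rw [MvPowerSeries.coeff_expand_of_not_dvd _ _ _ hi, if_neg]
    rintro ⟨a, -, rfl⟩
    simp at hi

/-- The tuples of monic polynomials of degrees `n` whose prime factors lie in `s` and whose
exponents at each `P ∈ s` lie in `A P`: the tuples counted by an Euler product. -/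
def eulerSet (s : Finset (MonicPrime F)) (A : MonicPrime F → Set (σ →₀ ℕ)) (n : σ →₀ ℕ) :
    Set (σ → F[X]) :=
  {f | (∀ i, (f i).Monic) ∧ (∀ i, (f i).natDegree = n i) ∧ (∀ P ∉ s, P.exponents f = 0) ∧
    ∀ P ∈ s, P.exponents f ∈ A P}

lemma sum_smul_exponents {s : Finset (MonicPrime F)} {f : σ → F[X]} (hf : ∀ i, (f i).Monic)
    (hs : ∀ P ∉ s, P.exponents f = 0) (i : σ) :
    (∑ P ∈ s, P.1.natDegree • P.exponents f) i = (f i).natDegree := by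
  conv_rhs =>
    rw [← MonicPrime.prod_pow_exponent (hf i) fun P hP => DFunLike.congr_fun (hs P hP) i,
      MonicPrime.natDegree_prod_pow]
  simp [Finsupp.finsetSum_apply]

lemma exponents_prod_pow {s : Finset (MonicPrime F)} (e : MonicPrime F → σ →₀ ℕ) (P : MonicPrime F)
    (he : P ∉ s → e P = 0) : P.exponents (fun i => ∏ Q ∈ s, Q.1 ^ e Q i) = e P := by
  ext i
  exact MonicPrime.exponent_prod_pow (fun Q => e Q i) P fun hP => by simp [he hP]

lemma exists_mem_eulerSet {s : Finset (MonicPrime F)} {A : MonicPrime F → Set (σ →₀ ℕ)}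
    {e : MonicPrime F → σ →₀ ℕ} (he : ∀ P ∉ s, e P = 0) (hA : ∀ P ∈ s, e P ∈ A P) :
    ∃ f ∈ eulerSet s A (∑ P ∈ s, P.1.natDegree • e P), ∀ P, P.exponents f = e P := by
  have hexp (P : MonicPrime F) := exponents_prod_pow e P (he P)
  have hmonic (i : σ) := MonicPrime.monic_prod_pow s fun Q => e Q i
  have hdeg := sum_smul_exponents hmonic fun P hP => (hexp P).trans (he P hP)
  simp only [hexp] at hdeg
  exact ⟨_, ⟨hmonic, fun i => (hdeg i).symm, fun P hP => (hexp P).trans (he P hP),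
    fun P hP => (hexp P).symm ▸ hA P hP⟩, hexp⟩

lemma eq_of_exponents_eq {s : Finset (MonicPrime F)} {A : MonicPrime F → Set (σ →₀ ℕ)}
    {n : σ →₀ ℕ} {f g : σ → F[X]} (hf : f ∈ eulerSet s A n) (hg : g ∈ eulerSet s A n)
    (h : ∀ P : MonicPrime F, P.exponents f = P.exponents g) : f = g := by
  ext1 i
  rw [← MonicPrime.prod_pow_exponent (hf.1 i) fun P hP => DFunLike.congr_fun (hf.2.2.1 P hP) i,
    ← MonicPrime.prod_pow_exponent (hg.1 i) fun P hP => DFunLike.congr_fun (hg.2.2.1 P hP) i]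
  exact Finset.prod_congr rfl fun P _ => congrArg _ (DFunLike.congr_fun (h P) i)

theorem coeff_prod_expand_indicatorSeries (s : Finset (MonicPrime F))
    (A : MonicPrime F → Set (σ →₀ ℕ)) (n : σ →₀ ℕ) :
    MvPowerSeries.coeff n
        (∏ P ∈ s, (indicatorSeries (A P)).expand P.1.natDegree P.natDegree_ne_zero) =
      (eulerSet s A n).ncard := by
  classical
  simp_rw [MvPowerSeries.coeff_prod, coeff_expand_indicatorSeries, Finset.prod_boole]
  rw [Finset.sum_boole, ← Set.ncard_coe_finset, Nat.cast_inj]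
  symm
  refine Set.ncard_congr (fun f hf => Finsupp.onFinset s
    (fun P => P.1.natDegree • P.exponents f) fun P hP => ?_) ?_ ?_ ?_
  · by_contra h
    simp [hf.2.2.1 P h] at hP
  · rintro f ⟨hmonic, hdeg, hs, hA⟩
    rw [Finset.mem_coe, Finset.mem_filter, Finset.mem_finsuppAntidiag]
    refine ⟨⟨?_, Finsupp.support_onFinset_subset⟩, fun P hP => ⟨_, hA P hP, rfl⟩⟩
    ext i
    exact (sum_smul_exponents hmonic hs i).trans (hdeg i)
  · exact fun f g hf hg hfg => eq_of_exponents_eq hf hg fun P =>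
      smul_right_injective _ P.natDegree_ne_zero (DFunLike.congr_fun hfg P)
  · intro l hl
    rw [Finset.mem_coe, Finset.mem_filter, Finset.mem_finsuppAntidiag] at hl
    obtain ⟨⟨hsum, hsupp⟩, hA⟩ := hl
    have hl0 (P) (hP : P ∉ s) : l P = 0 := Finsupp.notMem_support_iff.1 fun h => hP (hsupp h)
    have hall (P : MonicPrime F) : ∃ a, (P ∈ s → a ∈ A P) ∧ P.1.natDegree • a = l P := by
      by_cases hP : P ∈ s
      · obtain ⟨a, ha, hal⟩ := hA P hP
        exact ⟨a, fun _ => ha, hal⟩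
      · exact ⟨0, fun h => absurd h hP, by rw [hl0 P hP, smul_zero]⟩
    choose e heA hel using hall
    have he0 (P) (hP : P ∉ s) : e P = 0 :=
      (smul_eq_zero_iff_right P.natDegree_ne_zero).1 ((hel P).trans (hl0 P hP))
    obtain ⟨f, hf, hfe⟩ := exists_mem_eulerSet he0 heA
    simp only [hel, hsum] at hf
    exact ⟨f, hf, Finsupp.ext fun P => by rw [Finsupp.onFinset_apply, hfe, hel]⟩

end EulerProduct

section Majorizes

variable {σ τ : Type*}

/-- `Majorizes g f` says that the coefficients of `g` bound those of `f` in absolute value; in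
particular, those of `g` are nonnegative. -/
def Majorizes (g f : MvPowerSeries σ ℝ) : Prop :=
  ∀ n, |MvPowerSeries.coeff n f| ≤ MvPowerSeries.coeff n g

namespace Majorizes

variable {f f' g g' h : MvPowerSeries σ ℝ}

lemma trans (hhg : Majorizes h g) (hgf : Majorizes g f) : Majorizes h f :=
  fun n => (hgf n).trans ((le_abs_self _).trans (hhg n))

lemma add (hg : Majorizes g f) (hg' : Majorizes g' f') : Majorizes (g + g') (f + f') :=
  fun n => by
    rw [map_add, map_add]
    exact (abs_add_le _ _).trans (add_le_add (hg n) (hg' n))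

lemma mul (hg : Majorizes g f) (hg' : Majorizes g' f') : Majorizes (g * g') (f * f') := by
  classical
  intro n
  rw [MvPowerSeries.coeff_mul, MvPowerSeries.coeff_mul]
  refine (Finset.abs_sum_le_sum_abs _ _).trans (Finset.sum_le_sum fun p _ => ?_)
  rw [abs_mul]
  exact mul_le_mul (hg _) (hg' _) (abs_nonneg _) ((abs_nonneg _).trans (hg _))

lemma monomial_one (m : σ →₀ ℕ) :
    Majorizes (MvPowerSeries.monomial m (1 : ℝ)) (MvPowerSeries.monomial m 1) := by
  classical
  intro n
  rw [MvPowerSeries.coeff_monomial]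
  split_ifs <;> simp

lemma one_add_monomial_one (m : σ →₀ ℕ) :
    Majorizes (1 + MvPowerSeries.monomial m (1 : ℝ)) 1 := by
  have h0 : Majorizes (MvPowerSeries.monomial m (1 : ℝ)) 0 := fun n => by
    simpa using (abs_nonneg _).trans (monomial_one m n)
  simpa using (monomial_one (0 : σ →₀ ℕ)).add h0

lemma prod {s : Finset τ} {f g : τ → MvPowerSeries σ ℝ} (hgf : ∀ i ∈ s, Majorizes (g i) (f i)) :
    Majorizes (∏ i ∈ s, g i) (∏ i ∈ s, f i) := by
  classical
  induction s using Finset.induction_on with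
  | empty => exact monomial_one 0
  | insert a s ha ih =>
    rw [Finset.forall_mem_insert] at hgf
    rw [Finset.prod_insert ha, Finset.prod_insert ha]
    exact hgf.1.mul (ih hgf.2)

lemma expand [Finite σ] {p : ℕ} (hp : p ≠ 0) (hgf : Majorizes g f) :
    Majorizes (g.expand p hp) (f.expand p hp) := by
  intro n
  by_cases hdvd : ∀ i, p ∣ n i
  · choose m hm using hdvd
    obtain rfl : n = p • Finsupp.equivFunOnFinite.symm m := by ext i; simp [hm i]
    simpa only [MvPowerSeries.coeff_expand_smul] using hgf _
  · push Not at hdvd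
    obtain ⟨i, hi⟩ := hdvd
    simp [MvPowerSeries.coeff_expand_of_not_dvd _ _ _ hi]

lemma prod_one_add_monomial (s : Finset τ) (m : τ → σ →₀ ℕ) :
    Majorizes (∏ i ∈ s, (1 + MvPowerSeries.monomial (m i) (1 : ℝ)))
      (1 + ∑ i ∈ s, MvPowerSeries.monomial (m i) 1) := by
  classical
  induction s using Finset.induction_on with
  | empty => simpa using monomial_one 0
  | insert a s ha ih =>
    have hone : Majorizes (∏ i ∈ s, (1 + MvPowerSeries.monomial (m i) (1 : ℝ))) 1 := by
      simpa using prod fun i _ => one_add_monomial_one (m i)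
    rw [Finset.prod_insert ha, Finset.sum_insert ha, add_left_comm, one_add_mul, add_comm]
    simpa using ((monomial_one (m a)).mul hone).add ih

lemma prod_one_add_monomial_pow {E : Finset (σ →₀ ℕ)} {B : ℕ} (hE : 0 ∉ E)
    (hf0 : |MvPowerSeries.coeff 0 f| ≤ 1) (hfE : ∀ m ∈ E, |MvPowerSeries.coeff m f| ≤ B)
    (hf : ∀ n ≠ 0, n ∉ E → MvPowerSeries.coeff n f = 0) :
    Majorizes (∏ m ∈ E, (1 + MvPowerSeries.monomial m (1 : ℝ)) ^ B) f := by
  classical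
  have hprod := prod_one_add_monomial (E ×ˢ Finset.range B) (fun x => x.1 : _ → σ →₀ ℕ)
  simp only [Finset.prod_product, Finset.sum_product, Finset.prod_const, Finset.sum_const,
    Finset.card_range] at hprod
  refine hprod.trans fun n => ?_
  simp only [map_add, map_sum, map_nsmul, MvPowerSeries.coeff_one, MvPowerSeries.coeff_monomial,
    smul_ite, smul_zero, Finset.sum_ite_eq, nsmul_one]
  rcases eq_or_ne n 0 with rfl | hn0
  · simpa [hE] using hf0
  · by_cases hn : n ∈ E
    · simpa [hn0, hn] using hfE n hn
    · simp [hn0, hn, hf n hn0 hn]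

end Majorizes

end Majorizes

section Zeta

variable (F : Type*) [Field F]

lemma ncard_monic_natDegree_eq [Fintype F] (n : ℕ) :
    {f : F[X] | f.Monic ∧ f.natDegree = n}.ncard = Fintype.card F ^ n := by
  rw [← Nat.card_coe_set_eq]
  exact (Nat.card_congr ((monicEquivDegreeLT n).trans (degreeLTEquiv F n).toEquiv)).trans (by simp)

variable {F}

lemma coeff_prod_expand_mk_one (s : Finset (MonicPrime F)) (n : ℕ) :
    PowerSeries.coeff n
        (∏ P ∈ s, (PowerSeries.mk (1 : ℕ → ℝ)).expand P.1.natDegree P.natDegree_ne_zero) =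
      {f : F[X] | f.Monic ∧ f.natDegree = n ∧ ∀ P ∉ s, P.exponent f = 0}.ncard := by
  have hmk : PowerSeries.mk (1 : ℕ → ℝ) = indicatorSeries Set.univ := by
    ext n
    exact (PowerSeries.coeff_mk _ _).trans (if_pos (Set.mem_univ _)).symm
  rw [hmk]
  refine (coeff_prod_expand_indicatorSeries s (fun _ => Set.univ) (Finsupp.single () n)).trans ?_
  refine congrArg _ (Set.ncard_congr (fun f _ => f ()) ?_ ?_ ?_)
  · rintro f ⟨hmonic, hdeg, hs, -⟩
    exact ⟨hmonic (), by simpa using hdeg (), fun P hP => DFunLike.congr_fun (hs P hP) ()⟩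
  · exact fun f g _ _ h => funext fun _ => h
  · rintro f ⟨hmonic, hdeg, hs⟩
    exact ⟨fun _ => f, ⟨fun _ => hmonic, fun _ => by simpa using hdeg,
      fun P hP => Finsupp.ext fun _ => hs P hP, fun _ _ => trivial⟩, rfl⟩

lemma coeff_prod_expand_mk_one_le [Fintype F] (s : Finset (MonicPrime F)) (n : ℕ) :
    PowerSeries.coeff n
        (∏ P ∈ s, (PowerSeries.mk (1 : ℕ → ℝ)).expand P.1.natDegree P.natDegree_ne_zero) ≤
      (Fintype.card F : ℝ) ^ n := by
  have hcard := ncard_monic_natDegree_eq F n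
  rw [coeff_prod_expand_mk_one, ← Nat.cast_pow, ← hcard, Nat.cast_le]
  exact Set.ncard_le_ncard (fun f hf => ⟨hf.1, hf.2.1⟩)
    (Set.finite_of_ncard_ne_zero (hcard ▸ pow_ne_zero _ Fintype.card_ne_zero))

lemma coeff_prod_ofDegreeLE_expand_mk_one [Fintype F] {M n : ℕ} (hn : n ≤ M) :
    PowerSeries.coeff n (∏ P ∈ MonicPrime.ofDegreeLE F M,
        (PowerSeries.mk (1 : ℕ → ℝ)).expand P.1.natDegree P.natDegree_ne_zero) =
      (Fintype.card F : ℝ) ^ n := by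
  rw [coeff_prod_expand_mk_one, ← Nat.cast_pow, ← ncard_monic_natDegree_eq]
  congr 2 with f
  refine ⟨fun hf => ⟨hf.1, hf.2.1⟩, fun hf => ⟨hf.1, hf.2, fun P hP => ?_⟩⟩
  refine MonicPrime.exponent_eq_zero_of_natDegree_lt hf.1 ?_
  rw [MonicPrime.mem_ofDegreeLE] at hP
  exact (hf.2.trans_le hn).trans_lt (not_le.1 hP)

lemma expand_mk_one_mul_one_sub {p : ℕ} (hp : p ≠ 0) :
    (PowerSeries.mk (1 : ℕ → ℝ)).expand p hp * (1 - PowerSeries.X ^ p) = 1 := by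
  simpa using congrArg (PowerSeries.expand p hp) (PowerSeries.mk_one_mul_one_sub_eq_one ℝ)

theorem X_pow_dvd_prod_one_sub_X_pow_sub [Fintype F] (M : ℕ) :
    (X : ℝ[X]) ^ (M + 1) ∣
      ∏ P ∈ MonicPrime.ofDegreeLE F M, (1 - X ^ P.1.natDegree) -
        (1 - C (Fintype.card F : ℝ) * X) := by
  set q : ℝ := (Fintype.card F : ℝ)
  set Z : PowerSeries ℝ := ∏ P ∈ MonicPrime.ofDegreeLE F M,
    (PowerSeries.mk (1 : ℕ → ℝ)).expand P.1.natDegree P.natDegree_ne_zero with hZ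
  set Y : ℝ[X] := ∏ P ∈ MonicPrime.ofDegreeLE F M, (1 - X ^ P.1.natDegree) with hY
  have hZY : Z * Y = 1 := by
    rw [hZ, hY, ← coeToPowerSeries.ringHom_apply, map_prod, ← Finset.prod_mul_distrib]
    exact Finset.prod_eq_one fun P _ => by
      simpa using expand_mk_one_mul_one_sub P.natDegree_ne_zero
  have hgeom : PowerSeries.mk (q ^ ·) * (1 - PowerSeries.C q * PowerSeries.X) = 1 := by
    ext (_ | n)
    · simp
    · simp [mul_sub, mul_left_comm _ (PowerSeries.C q), pow_succ', PowerSeries.coeff_one,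
        ← mul_assoc]
  have hdvd : PowerSeries.X ^ (M + 1) ∣ PowerSeries.mk (q ^ ·) - Z := by
    refine PowerSeries.X_pow_dvd_iff.2 fun n hn => ?_
    rw [map_sub, hZ, coeff_prod_ofDegreeLE_expand_mk_one (Nat.lt_succ_iff.1 hn),
      PowerSeries.coeff_mk, sub_self]
  have hdiff : ((Y - (1 - C q * X) : ℝ[X]) : PowerSeries ℝ) =
      (Y : PowerSeries ℝ) * (1 - PowerSeries.C q * PowerSeries.X) *
        (PowerSeries.mk (q ^ ·) - Z) := by
    push_cast
    linear_combination (1 - PowerSeries.C q * PowerSeries.X) * hZY - (Y : PowerSeries ℝ) * hgeom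
  refine X_pow_dvd_iff.2 fun n hn => ?_
  rw [← coeff_coe, hdiff]
  exact PowerSeries.X_pow_dvd_iff.1 (hdvd.mul_left _) n hn

lemma abs_coeff_prod_one_add_X_pow_le [Fintype F] (s : Finset (MonicPrime F)) (n : ℕ) :
    |(∏ P ∈ s, (1 + (X : ℝ[X]) ^ P.1.natDegree)).coeff n| ≤ (Fintype.card F : ℝ) ^ n := by
  have hone : Majorizes (PowerSeries.mk (1 : ℕ → ℝ)) (1 + PowerSeries.X : PowerSeries ℝ) := by
    intro m
    obtain ⟨n, rfl⟩ : ∃ n, m = Finsupp.single () n := ⟨m (), Finsupp.unique_single m⟩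
    change |PowerSeries.coeff n (1 + PowerSeries.X)| ≤ PowerSeries.coeff n (PowerSeries.mk 1)
    rcases n with _ | _ | n <;> simp [PowerSeries.coeff_one, PowerSeries.coeff_X]
  have hprod : Majorizes
      (∏ P ∈ s, (PowerSeries.mk (1 : ℕ → ℝ)).expand P.1.natDegree P.natDegree_ne_zero)
      (∏ P ∈ s, (1 + PowerSeries.X ^ P.1.natDegree : PowerSeries ℝ)) :=
    Majorizes.prod fun P _ => by
      have hexpand : Majorizes _ (PowerSeries.expand P.1.natDegree P.natDegree_ne_zero
        (1 + PowerSeries.X)) := hone.expand P.natDegree_ne_zero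
      rwa [map_add, map_one, PowerSeries.expand_X] at hexpand
  refine le_trans ?_ ((hprod (Finsupp.single () n)).trans (coeff_prod_expand_mk_one_le s n))
  rw [← coeff_coe, ← coeToPowerSeries.ringHom_apply, map_prod]
  simp [PowerSeries.coeff]

end Zeta

section PolyExpBounded

open Finset.HasAntidiagonal

variable {ι τ : Type*}

lemma card_antidiagonal_le [Fintype ι] [DecidableEq ι] (n : ι →₀ ℕ) :
    (antidiagonal n).card ≤ (1 + n.degree) ^ Fintype.card ι := by
  have hIic : (antidiagonal n).card ≤ (Finset.Iic n).card := by
    refine Finset.card_le_card_of_injOn Prod.fst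
      (fun p hp => Finset.mem_coe.2 (Finset.mem_Iic.2 (antidiagonal.fst_le hp))) ?_
    intro p hp p' hp' h
    rw [Finset.mem_coe, mem_antidiagonal] at hp hp'
    exact Prod.ext h (add_left_cancel ((hp.trans hp'.symm).trans (congrArg (· + p'.2) h.symm)))
  have hfactor (i : ι) : (Finset.Iic (n i)).card ≤ 1 + n.degree := by
    rw [Nat.card_Iic, add_comm]
    exact Nat.add_le_add_left (Finsupp.le_degree i n) 1
  rw [Finsupp.card_Iic] at hIic
  calc (antidiagonal n).card
      ≤ (1 + n.degree) ^ n.support.card :=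
        hIic.trans (Finset.prod_le_pow_card _ _ _ fun i _ => hfactor i)
    _ ≤ (1 + n.degree) ^ Fintype.card ι :=
        Nat.pow_le_pow_right (by omega) (Finset.card_le_univ _)

/-- The coefficients of `f` at `x^n` are bounded by `s ^ ∑_{i ∈ U} n_i` up to the polynomial factor
`(1 + |n|) ^ K`. -/
def PolyExpBounded (s : ℝ) (U : Finset ι) (K : ℕ) (f : MvPowerSeries ι ℝ) : Prop :=
  ∀ n, |MvPowerSeries.coeff n f| ≤ (1 + (n.degree : ℝ)) ^ K * s ^ ∑ i ∈ U, n i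

namespace PolyExpBounded

variable {s : ℝ} {U : Finset ι} {K K' : ℕ} {f g : MvPowerSeries ι ℝ}

lemma of_abs_coeff_le_one (hs : 1 ≤ s) (hf : ∀ n, |MvPowerSeries.coeff n f| ≤ 1) :
    PolyExpBounded s U 0 f := fun n => by
  simpa using (hf n).trans (one_le_pow₀ hs)

lemma of_majorizes (hg : PolyExpBounded s U K g) (hgf : Majorizes g f) : PolyExpBounded s U K f :=
  fun n => (hgf n).trans ((le_abs_self _).trans (hg n))

lemma mono (hs : 0 ≤ s) (hK : K ≤ K') (hf : PolyExpBounded s U K f) : PolyExpBounded s U K' f :=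
  fun n => (hf n).trans (by gcongr; simp)

lemma mul [Fintype ι] (hs : 0 ≤ s) (hf : PolyExpBounded s U K f) (hg : PolyExpBounded s U K' g) :
    PolyExpBounded s U (K + K' + Fintype.card ι) (f * g) := by
  classical
  intro n
  have hterm (p) (hp : p ∈ antidiagonal n) :
      |MvPowerSeries.coeff p.1 f * MvPowerSeries.coeff p.2 g| ≤
        (1 + (n.degree : ℝ)) ^ (K + K') * s ^ ∑ i ∈ U, n i := by
    obtain rfl := mem_antidiagonal.1 hp
    rw [abs_mul]
    calc |MvPowerSeries.coeff p.1 f| * |MvPowerSeries.coeff p.2 g|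
        ≤ ((1 + (p.1.degree : ℝ)) ^ K * s ^ ∑ i ∈ U, p.1 i) *
          ((1 + (p.2.degree : ℝ)) ^ K' * s ^ ∑ i ∈ U, p.2 i) :=
          mul_le_mul (hf _) (hg _) (abs_nonneg _) (by positivity)
      _ = ((1 + (p.1.degree : ℝ)) ^ K * (1 + (p.2.degree : ℝ)) ^ K') *
          s ^ ∑ i ∈ U, (p.1 + p.2) i := by
          simp only [Finsupp.add_apply, Finset.sum_add_distrib, pow_add]; ring
      _ ≤ (1 + ((p.1 + p.2).degree : ℝ)) ^ (K + K') * s ^ ∑ i ∈ U, (p.1 + p.2) i := by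
          rw [pow_add _ K]
          gcongr <;> simp
  have hcard : ((antidiagonal n).card : ℝ) ≤ (1 + (n.degree : ℝ)) ^ Fintype.card ι := by
    exact_mod_cast card_antidiagonal_le n
  rw [MvPowerSeries.coeff_mul]
  calc |∑ p ∈ antidiagonal n, MvPowerSeries.coeff p.1 f * MvPowerSeries.coeff p.2 g|
      ≤ (antidiagonal n).card •
          ((1 + (n.degree : ℝ)) ^ (K + K') * s ^ ∑ i ∈ U, n i) :=
        (Finset.abs_sum_le_sum_abs _ _).trans (Finset.sum_le_card_nsmul _ _ _ hterm)
    _ ≤ (1 + (n.degree : ℝ)) ^ Fintype.card ι *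
          ((1 + (n.degree : ℝ)) ^ (K + K') * s ^ ∑ i ∈ U, n i) := by
        rw [nsmul_eq_mul]; gcongr
    _ = (1 + (n.degree : ℝ)) ^ (K + K' + Fintype.card ι) * s ^ ∑ i ∈ U, n i := by ring

lemma prod [Fintype ι] (hs : 1 ≤ s) {t : Finset τ} {f : τ → MvPowerSeries ι ℝ}
    (hf : ∀ i ∈ t, PolyExpBounded s U K (f i)) :
    PolyExpBounded s U (t.card * (K + Fintype.card ι)) (∏ i ∈ t, f i) := by
  classical
  induction t using Finset.induction_on with
  | empty =>
    rw [Finset.prod_empty, Finset.card_empty, zero_mul]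
    refine of_abs_coeff_le_one hs fun n => ?_
    rw [MvPowerSeries.coeff_one]
    split_ifs <;> simp
  | insert a t ha ih =>
    rw [Finset.forall_mem_insert] at hf
    rw [Finset.prod_insert ha, Finset.card_insert_of_notMem ha]
    convert hf.1.mul (zero_le_one.trans hs) (ih hf.2) using 1
    ring

end PolyExpBounded

end PolyExpBounded

section MonomialZeta

variable {F : Type*} [Field F] {σ : Type*}

lemma coeff_aeval_monomial_one [DecidableEq σ] (m n : σ →₀ ℕ) (p : ℝ[X]) :
    MvPowerSeries.coeff n (aeval (MvPowerSeries.monomial m (1 : ℝ)) p) =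
      ∑ t ∈ Finset.range (p.natDegree + 1), if n = t • m then p.coeff t else 0 := by
  simp [aeval_eq_sum_range, MvPowerSeries.monomial_pow, MvPowerSeries.coeff_monomial]

lemma aeval_prod_one_add_X_pow (s : Finset (MonicPrime F)) (m : σ →₀ ℕ) :
    aeval (MvPowerSeries.monomial m (1 : ℝ)) (∏ P ∈ s, (1 + (X : ℝ[X]) ^ P.1.natDegree)) =
      ∏ P ∈ s, (1 + MvPowerSeries.monomial (P.1.natDegree • m) (1 : ℝ)) := by
  simp [map_prod, MvPowerSeries.monomial_pow]

lemma PolyExpBounded.prod_one_add_monomial [Fintype F] {r : ℝ} (hr : 1 ≤ r)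
    (hq : r ^ 2 = Fintype.card F) {U : Finset σ} {m : σ →₀ ℕ} (hm : 2 ≤ ∑ i ∈ U, m i)
    (s : Finset (MonicPrime F)) :
    PolyExpBounded r U 0 (∏ P ∈ s, (1 + MvPowerSeries.monomial (P.1.natDegree • m) (1 : ℝ))) := by
  classical
  intro n
  have hinj (t t' : ℕ) : t • m = t' • m ↔ t = t' := by
    have hpos : 0 < ∑ i ∈ U, m i := two_pos.trans_le hm
    refine ⟨fun h => Nat.eq_of_mul_eq_mul_right hpos ?_, congrArg (· • m)⟩
    simpa [Finset.mul_sum] using congrArg (fun a : σ →₀ ℕ => ∑ i ∈ U, a i) h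
  rw [← aeval_prod_one_add_X_pow, coeff_aeval_monomial_one, pow_zero, one_mul]
  by_cases h : ∃ t : ℕ, n = t • m
  · obtain ⟨t, rfl⟩ := h
    have hcoeff := abs_coeff_prod_one_add_X_pow_le s t
    simp only [hinj, Finset.sum_ite_eq]
    split_ifs
    · calc _ ≤ (Fintype.card F : ℝ) ^ t := hcoeff
        _ = r ^ (t * 2) := by rw [← hq, ← pow_mul, mul_comm]
        _ ≤ r ^ (t * ∑ i ∈ U, m i) := pow_le_pow_right₀ hr (Nat.mul_le_mul_left t hm)
        _ = r ^ ∑ i ∈ U, (t • m) i := by simp [Finset.mul_sum]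
    · simpa using pow_nonneg (zero_le_one.trans hr) _
  · push Not at h
    simpa [h] using pow_nonneg (zero_le_one.trans hr) _

theorem PolyExpBounded.prod_expand [Fintype F] [Fintype σ] {r : ℝ} (hr : 1 ≤ r)
    (hq : r ^ 2 = Fintype.card F) {U : Finset σ} {f : MvPowerSeries σ ℝ} {E : Finset (σ →₀ ℕ)}
    {B : ℕ} (hf0 : |MvPowerSeries.coeff 0 f| ≤ 1) (hfE : ∀ m ∈ E, |MvPowerSeries.coeff m f| ≤ B)
    (hf : ∀ n ≠ 0, n ∉ E → MvPowerSeries.coeff n f = 0) (hE : ∀ m ∈ E, 2 ≤ ∑ i ∈ U, m i)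
    (s : Finset (MonicPrime F)) :
    PolyExpBounded r U (E.card * (B * Fintype.card σ + Fintype.card σ))
      (∏ P ∈ s, f.expand P.1.natDegree P.natDegree_ne_zero) := by
  have hmaj : Majorizes
      (∏ P ∈ s, ∏ m ∈ E, (1 + MvPowerSeries.monomial (P.1.natDegree • m) (1 : ℝ)) ^ B)
      (∏ P ∈ s, f.expand P.1.natDegree P.natDegree_ne_zero) :=
    Majorizes.prod fun P _ => by
      have h0 : 0 ∉ E := fun h => by simpa using hE 0 h
      simpa using (Majorizes.prod_one_add_monomial_pow h0 hf0 hfE hf).expand P.natDegree_ne_zero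
  refine PolyExpBounded.of_majorizes ?_ hmaj
  rw [Finset.prod_comm]
  refine .prod hr fun m hm => ?_
  simpa [Finset.prod_pow] using PolyExpBounded.prod hr (t := Finset.range B) fun _ _ =>
    PolyExpBounded.prod_one_add_monomial hr hq (hE m hm) s

lemma coeff_prod_one_sub_monomial [Fintype F] {M : ℕ} {m n : σ →₀ ℕ}
    (hn : ¬ (M + 1) • m ≤ n) :
    MvPowerSeries.coeff n (∏ P ∈ MonicPrime.ofDegreeLE F M,
        (1 - MvPowerSeries.monomial (P.1.natDegree • m) (1 : ℝ))) =
      MvPowerSeries.coeff n (1 - MvPowerSeries.monomial m (Fintype.card F : ℝ)) := by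
  classical
  obtain ⟨g, hg⟩ := X_pow_dvd_prod_one_sub_X_pow_sub (F := F) M
  replace hg := congrArg (aeval (MvPowerSeries.monomial m (1 : ℝ))) hg
  have hq : MvPowerSeries.monomial m (Fintype.card F : ℝ) =
      (Fintype.card F : MvPowerSeries σ ℝ) * MvPowerSeries.monomial m 1 := by
    rw [← map_natCast (MvPowerSeries.C (σ := σ) (R := ℝ)), ← MvPowerSeries.monomial_zero_eq_C_apply,
      MvPowerSeries.monomial_mul_monomial, zero_add, mul_one]
  simp only [map_sub, map_mul, map_prod, map_one, map_pow, aeval_X, map_natCast,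
    MvPowerSeries.monomial_pow, one_pow, ← hq] at hg
  rw [← sub_eq_zero, ← map_sub, hg, MvPowerSeries.coeff_monomial_mul, if_neg hn]

end MonomialZeta

section Toggle

open scoped symmDiff

lemma sum_neg_one_pow_card_eq_zero_of_toggle {α : Type*} [DecidableEq α]
    {G : Finset (Finset α)} {t : Finset α → α} (hG : ∀ J ∈ G, J ∆ {t J} ∈ G)
    (ht : ∀ J ∈ G, t (J ∆ {t J}) = t J) : ∑ J ∈ G, (-1 : ℝ) ^ J.card = 0 := by
  refine Finset.sum_involution (fun J _ => J ∆ {t J}) (fun J _ => ?_) (fun J _ _ => ?_) hG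
    fun J hJ => by rw [ht J hJ, symmDiff_symmDiff_cancel_right]
  · by_cases h : t J ∈ J
    · have hcard := Finset.card_erase_add_one h
      rw [symmDiff_of_ge (Finset.singleton_subset_iff.2 h), Finset.sdiff_singleton_eq_erase,
        ← hcard, pow_succ]
      ring
    · rw [(Finset.disjoint_singleton_right.2 h).symmDiff_eq_sup, Finset.sup_eq_union,
        Finset.union_comm, ← Finset.insert_eq, Finset.card_insert_of_notMem h, pow_succ]
      ring
  · rw [Ne, symmDiff_eq_left]
    exact Finset.singleton_ne_empty _

end Toggle

section GraphDegree

variable {ι : Type*}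

/-- The exponent of the monomial `x_i x_j`, for the pair `x = (i, j)`. -/
def pairDegree (x : ι × ι) : ι →₀ ℕ := Finsupp.single x.1 1 + Finsupp.single x.2 1

lemma pairDegree_ne_zero (x : ι × ι) : pairDegree x ≠ 0 := fun h => by
  simpa [pairDegree] using DFunLike.congr_fun h x.1

/-- The degree sequence of the graph with edge set `J`, which is the exponent of the monomial
`∏_{(i, j) ∈ J} x_i x_j`. -/
def graphDegree (J : Finset (ι × ι)) : ι →₀ ℕ := ∑ x ∈ J, pairDegree x

lemma graphDegree_mono {I J : Finset (ι × ι)} (h : I ⊆ J) : graphDegree I ≤ graphDegree J :=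
  Finset.sum_le_sum_of_subset h

variable [Fintype ι] [DecidableEq ι] {S : Finset ι} {J : Finset (ι × ι)}

lemma graphDegree_apply_of_mem (hJ : J ⊆ S ×ˢ Sᶜ) {i : ι} (hi : i ∈ S) :
    graphDegree J i = (J.filter fun x => x.1 = i).card := by
  rw [graphDegree, Finsupp.finsetSum_apply, Finset.card_filter]
  refine Finset.sum_congr rfl fun x hx => ?_
  have hne : x.2 ≠ i := fun h =>
    Finset.mem_compl.1 (Finset.mem_product.1 (hJ hx)).2 (h.symm ▸ hi)
  simp [pairDegree, Finsupp.single_apply, hne]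

lemma graphDegree_apply_of_notMem (hJ : J ⊆ S ×ˢ Sᶜ) {i : ι} (hi : i ∉ S) :
    graphDegree J i = (J.filter fun x => x.2 = i).card := by
  rw [graphDegree, Finsupp.finsetSum_apply, Finset.card_filter]
  refine Finset.sum_congr rfl fun x hx => ?_
  have hne : x.1 ≠ i := fun h => hi (h ▸ (Finset.mem_product.1 (hJ hx)).1)
  simp [pairDegree, Finsupp.single_apply, hne]

lemma sum_graphDegree (hJ : J ⊆ S ×ˢ Sᶜ) : ∑ i ∈ S, graphDegree J i = J.card := by
  rw [Finset.card_eq_sum_card_fiberwise fun x hx => (Finset.mem_product.1 (hJ hx)).1]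
  exact Finset.sum_congr rfl fun i hi => graphDegree_apply_of_mem hJ hi

lemma sum_compl_graphDegree (hJ : J ⊆ S ×ˢ Sᶜ) : ∑ i ∈ Sᶜ, graphDegree J i = J.card := by
  rw [Finset.card_eq_sum_card_fiberwise fun x hx => (Finset.mem_product.1 (hJ hx)).2]
  exact Finset.sum_congr rfl fun i hi => graphDegree_apply_of_notMem hJ (Finset.mem_compl.1 hi)

/-- The edge sets of the bipartite graphs between `S` and its complement whose degrees are bounded
by `a`: they index the expansion of the coefficient of `x^a` in the local factors. -/
def boundedGraphs (S : Finset ι) (a : ι →₀ ℕ) : Finset (Finset (ι × ι)) :=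
  open scoped Classical in (S ×ˢ Sᶜ).powerset.filter fun J => graphDegree J ≤ a

lemma mem_boundedGraphs {a : ι →₀ ℕ} :
    J ∈ boundedGraphs S a ↔ J ⊆ S ×ˢ Sᶜ ∧ graphDegree J ≤ a := by
  simp [boundedGraphs]

lemma exists_graphDegree_filter_lt {a : ι →₀ ℕ} (ha : ∑ i ∈ S, a i = ∑ i ∈ Sᶜ, a i)
    (hJ : J ∈ boundedGraphs S a) {j : ι} (hj : j ∉ S) (haj : 0 < a j) :
    ∃ i ∈ S, graphDegree (J.filter fun x => x.2 ≠ j) i < a i := by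
  rw [mem_boundedGraphs] at hJ
  have hsub := J.filter_subset fun x => x.2 ≠ j
  by_contra! hle
  have hj0 : graphDegree (J.filter fun x => x.2 ≠ j) j = 0 := by
    rw [graphDegree_apply_of_notMem (hsub.trans hJ.1) hj, Finset.card_eq_zero,
      Finset.filter_filter, Finset.filter_eq_empty_iff]
    exact fun x _ h => h.1 h.2
  have hlt : ∑ i ∈ Sᶜ, graphDegree (J.filter fun x => x.2 ≠ j) i < ∑ i ∈ Sᶜ, a i :=
    Finset.sum_lt_sum (fun i _ => ((graphDegree_mono hsub).trans hJ.2) i)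
      ⟨j, Finset.mem_compl.2 hj, by rwa [hj0]⟩
  rw [sum_compl_graphDegree (hsub.trans hJ.1), ← sum_graphDegree (hsub.trans hJ.1), ← ha] at hlt
  exact hlt.not_ge (Finset.sum_le_sum hle)

lemma graphDegree_lt_of_pair_notMem {a : ι →₀ ℕ} (hJ : J ∈ boundedGraphs S a) {i j : ι}
    (hi : i ∈ S) (hj : j ∉ S) (hij : (i, j) ∉ J) (hJi : graphDegree J i < a i)
    (haj : S.card ≤ a j ∨ ∑ i ∈ S, a i ≤ a j) : graphDegree J j < a j := by
  rw [mem_boundedGraphs] at hJ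
  have hJj := graphDegree_apply_of_notMem hJ.1 hj
  rcases haj with haj | haj
  · refine lt_of_lt_of_le ?_ haj
    rw [hJj, ← Finset.card_image_of_injOn (f := Prod.fst) fun x hx y hy hxy => Prod.ext hxy
      ((Finset.mem_filter.1 hx).2.trans (Finset.mem_filter.1 hy).2.symm)]
    refine Finset.card_lt_card (Finset.ssubset_iff.2 ⟨i, ?_, Finset.insert_subset hi ?_⟩)
    · simpa using hij
    · exact Finset.image_subset_iff.2 fun x hx =>
        (Finset.mem_product.1 (hJ.1 (Finset.mem_filter.1 hx).1)).1
  · calc graphDegree J j ≤ J.card := hJj.trans_le (Finset.card_filter_le _ _)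
      _ = ∑ i ∈ S, graphDegree J i := (sum_graphDegree hJ.1).symm
      _ < ∑ i ∈ S, a i := Finset.sum_lt_sum (fun i _ => hJ.2 i) ⟨i, hi, hJi⟩
      _ ≤ a j := haj

lemma insert_mem_boundedGraphs {a : ι →₀ ℕ} (hJ : J ∈ boundedGraphs S a) {i j : ι}
    (hi : i ∈ S) (hj : j ∉ S) (hij : (i, j) ∉ J) (hJi : graphDegree J i < a i)
    (hJj : graphDegree J j < a j) : insert (i, j) J ∈ boundedGraphs S a := by
  rw [mem_boundedGraphs] at hJ ⊢
  refine ⟨Finset.insert_subset (Finset.mk_mem_product hi (Finset.mem_compl.2 hj)) hJ.1, fun l => ?_⟩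
  have hne : i ≠ j := fun h => hj (h ▸ hi)
  have hl := hJ.2 l
  rw [graphDegree, Finset.sum_insert hij, ← graphDegree]
  by_cases hli : i = l <;> by_cases hlj : j = l <;>
    simp_all [pairDegree] <;> omega

open scoped symmDiff in
theorem sum_boundedGraphs_neg_one_pow_card {a : ι →₀ ℕ} (ha : ∑ i ∈ S, a i = ∑ i ∈ Sᶜ, a i)
    {j : ι} (hj : j ∉ S) (haj : 0 < a j) (hlarge : S.card ≤ a j ∨ ∑ i ∈ S, a i ≤ a j) :
    ∑ J ∈ boundedGraphs S a, (-1 : ℝ) ^ J.card = 0 := by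
  -- The edge toggled in `J` joins `j` to a vertex which depends only on the edges of `J` missing
  -- `j`. These are not affected by the toggling, which is therefore an involution.
  have hpick (J : Finset (ι × ι)) :
      ∃ i, (∃ i ∈ S, graphDegree J i < a i) → i ∈ S ∧ graphDegree J i < a i := by
    by_cases h : ∃ i ∈ S, graphDegree J i < a i
    · exact h.imp fun i hi _ => hi
    · exact ⟨j, fun h' => absurd h' h⟩
  choose pick hpick using hpick
  refine sum_neg_one_pow_card_eq_zero_of_toggle
    (t := fun J => (pick (J.filter fun x => x.2 ≠ j), j)) (fun J hJ => ?_) fun J _ => ?_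
  · obtain ⟨hi, hJi⟩ := hpick _ (exists_graphDegree_filter_lt ha hJ hj haj)
    set i := pick (J.filter fun x => x.2 ≠ j)
    by_cases hij : (i, j) ∈ J
    · rw [symmDiff_of_ge (Finset.singleton_subset_iff.2 hij)]
      have hsub := J.sdiff_subset (t := {(i, j)})
      rw [mem_boundedGraphs] at hJ ⊢
      exact ⟨hsub.trans hJ.1, (graphDegree_mono hsub).trans hJ.2⟩
    · have hfilter : graphDegree J i = graphDegree (J.filter fun x => x.2 ≠ j) i := by
        have hJS := (mem_boundedGraphs.1 hJ).1
        rw [graphDegree_apply_of_mem hJS hi,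
          graphDegree_apply_of_mem ((J.filter_subset _).trans hJS) hi, Finset.filter_filter]
        congr 1
        refine Finset.filter_congr fun x hx => (and_iff_right_of_imp fun hxi hxj => hij ?_).symm
        exact (Prod.ext hxi hxj : x = (i, j)) ▸ hx
      rw [← hfilter] at hJi
      rw [(Finset.disjoint_singleton_right.2 hij).symmDiff_eq_sup, Finset.sup_eq_union,
        Finset.union_comm, ← Finset.insert_eq]
      exact insert_mem_boundedGraphs hJ hi hj hij hJi
        (graphDegree_lt_of_pair_notMem hJ hi hj hij hJi hlarge)
  · congr 2
    ext x
    simp only [Finset.mem_filter, Finset.mem_symmDiff, Finset.mem_singleton]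
    grind

end GraphDegree

section LocalFactor

variable {ι : Type*} [Fintype ι] [DecidableEq ι]

/-- The exponents with equal sums over `S` and its complement: those allowed by the diagonal
condition at the primes other than `T`. -/
def balanced (S : Finset ι) : Set (ι →₀ ℕ) := {a | ∑ i ∈ S, a i = ∑ i ∈ Sᶜ, a i}

/-- The Euler factor `∏_{i ∈ S, j ∉ S} (1 - x_i x_j) ∑_{a ∈ A} x^a` of the twisted diagonal sum at a
prime whose exponents range over `A`. -/
def localFactor (S : Finset ι) (A : Set (ι →₀ ℕ)) : MvPowerSeries ι ℝ :=
  (∏ x ∈ S ×ˢ Sᶜ, (1 - MvPowerSeries.monomial (pairDegree x) 1)) * indicatorSeries A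

variable {S : Finset ι} {a : ι →₀ ℕ}

lemma localFactor_compl (S : Finset ι) (A : Set (ι →₀ ℕ)) : localFactor Sᶜ A = localFactor S A := by
  rw [localFactor, localFactor, compl_compl, Finset.prod_product, Finset.prod_product_right]
  simp only [pairDegree, add_comm]

lemma balanced_compl (S : Finset ι) : balanced Sᶜ = balanced S := by
  ext a
  rw [balanced, balanced, compl_compl, Set.mem_ofPred_eq, Set.mem_ofPred_eq, eq_comm]

omit [Fintype ι] [DecidableEq ι] in
open scoped Classical in
lemma coeff_prod_one_sub_monomial_pairDegree_mul (T : Finset (ι × ι)) (c : ℝ)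
    (G : MvPowerSeries ι ℝ) (n : ι →₀ ℕ) :
    MvPowerSeries.coeff n ((∏ x ∈ T, (1 - MvPowerSeries.monomial (pairDegree x) c)) * G) =
      ∑ J ∈ T.powerset, if graphDegree J ≤ n then
        (-c) ^ J.card * MvPowerSeries.coeff (n - graphDegree J) G else 0 := by
  have hmonomial (J : Finset (ι × ι)) : ∏ x ∈ J, MvPowerSeries.monomial (pairDegree x) (-c) =
      MvPowerSeries.monomial (graphDegree J) ((-c) ^ J.card) := by
    rw [MvPowerSeries.prod_monomial, Finset.prod_const, graphDegree]
  simp_rw [sub_eq_add_neg, ← map_neg]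
  rw [Finset.prod_one_add, Finset.sum_mul, map_sum]
  simp_rw [hmonomial, MvPowerSeries.coeff_monomial_mul]

open scoped Classical in
lemma coeff_localFactor_balanced (S : Finset ι) (a : ι →₀ ℕ) :
    MvPowerSeries.coeff a (localFactor S (balanced S)) =
      if a ∈ balanced S then ∑ J ∈ boundedGraphs S a, (-1 : ℝ) ^ J.card else 0 := by
  rw [localFactor, coeff_prod_one_sub_monomial_pairDegree_mul, ← Finset.sum_filter]
  have hbalanced (J) (hJ : J ∈ boundedGraphs S a) :
      a - graphDegree J ∈ balanced S ↔ a ∈ balanced S := by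
    rw [mem_boundedGraphs] at hJ
    have hS := sum_graphDegree hJ.1
    have hSc := sum_compl_graphDegree hJ.1
    obtain ⟨b, rfl⟩ := exists_add_of_le hJ.2
    simp [balanced, Finset.sum_add_distrib, hS, hSc]
  rw [boundedGraphs] at hbalanced ⊢
  split_ifs with ha
  · exact Finset.sum_congr rfl fun J hJ => by
      rw [coeff_indicatorSeries, if_pos ((hbalanced J hJ).2 ha), mul_one]
  · exact Finset.sum_eq_zero fun J hJ => by
      rw [coeff_indicatorSeries, if_neg (mt (hbalanced J hJ).1 ha), mul_zero]

lemma abs_coeff_localFactor_balanced_le (S : Finset ι) (a : ι →₀ ℕ) :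
    |MvPowerSeries.coeff a (localFactor S (balanced S))| ≤ (2 ^ (S ×ˢ Sᶜ).card : ℕ) := by
  classical
  have hcard : (boundedGraphs S a).card ≤ 2 ^ (S ×ˢ Sᶜ).card := by
    rw [← Finset.card_powerset]
    exact Finset.card_le_card fun J hJ => Finset.mem_powerset.2 (mem_boundedGraphs.1 hJ).1
  rw [coeff_localFactor_balanced]
  split_ifs
  · calc |∑ J ∈ boundedGraphs S a, (-1 : ℝ) ^ J.card| ≤ ∑ J ∈ boundedGraphs S a, 1 :=
          (Finset.abs_sum_le_sum_abs _ _).trans (by simp)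
      _ ≤ (2 ^ (S ×ˢ Sᶜ).card : ℕ) := by
        rw [Finset.sum_const, nsmul_one]
        exact_mod_cast hcard
  · rw [abs_zero]
    exact Nat.cast_nonneg _

lemma coeff_zero_localFactor_balanced (S : Finset ι) :
    MvPowerSeries.coeff 0 (localFactor S (balanced S)) = 1 := by
  classical
  have hfactor (x : ι × ι) :
      MvPowerSeries.constantCoeff (MvPowerSeries.monomial (pairDegree x) (1 : ℝ)) = 0 := by
    rw [← MvPowerSeries.coeff_zero_eq_constantCoeff_apply, MvPowerSeries.coeff_monomial,
      if_neg (pairDegree_ne_zero x).symm]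
  rw [MvPowerSeries.coeff_zero_eq_constantCoeff_apply, localFactor, map_mul, map_prod,
    ← MvPowerSeries.coeff_zero_eq_constantCoeff_apply (indicatorSeries _), coeff_indicatorSeries]
  simp [hfactor, balanced]

lemma coeff_localFactor_balanced_eq_zero {j : ι} (hj : j ∉ S) (haj : 0 < a j)
    (hlarge : S.card ≤ a j ∨ ∑ i ∈ S, a i ≤ a j) :
    MvPowerSeries.coeff a (localFactor S (balanced S)) = 0 := by
  classical
  rw [coeff_localFactor_balanced, ite_eq_right_iff]
  exact fun ha => sum_boundedGraphs_neg_one_pow_card ha hj haj hlarge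

lemma lt_card_of_coeff_localFactor_ne_zero
    (h : MvPowerSeries.coeff a (localFactor S (balanced S)) ≠ 0) (j : ι) :
    a j < Fintype.card ι := by
  by_contra! hle
  have haj : 0 < a j := (Fintype.card_pos_iff.2 ⟨j⟩).trans_le hle
  refine h ?_
  by_cases hj : j ∈ S
  · rw [← localFactor_compl, ← balanced_compl]
    exact coeff_localFactor_balanced_eq_zero (Finset.notMem_compl.2 hj) haj
      (.inl ((Finset.card_le_univ _).trans hle))
  · exact coeff_localFactor_balanced_eq_zero hj haj (.inl ((Finset.card_le_univ _).trans hle))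

variable (S) in
lemma finite_setOf_coeff_localFactor_ne_zero :
    {a | MvPowerSeries.coeff a (localFactor S (balanced S)) ≠ 0}.Finite :=
  (Set.finite_Iic (Finsupp.equivFunOnFinite.symm fun _ : ι => Fintype.card ι)).subset
    fun _ ha j => (lt_card_of_coeff_localFactor_ne_zero ha j).le

variable (S) in
/-- The finitely many nonzero exponents which occur in the local factor at a prime other
than `T`. -/
def localSupport : Finset (ι →₀ ℕ) :=
  (finite_setOf_coeff_localFactor_ne_zero S).toFinset.erase 0

lemma mem_localSupport : a ∈ localSupport S ↔
    a ≠ 0 ∧ MvPowerSeries.coeff a (localFactor S (balanced S)) ≠ 0 := by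
  simp [localSupport]

variable (S) in
lemma localSupport_compl : localSupport Sᶜ = localSupport S := by
  ext a
  rw [mem_localSupport, mem_localSupport, localFactor_compl, balanced_compl]

lemma balanced_of_mem_localSupport (ha : a ∈ localSupport S) : ∑ i ∈ S, a i = ∑ i ∈ Sᶜ, a i := by
  classical
  have h := (mem_localSupport.1 ha).2
  rw [coeff_localFactor_balanced] at h
  exact (ite_ne_right_iff.1 h).1

lemma sum_pos_of_mem_localSupport (ha : a ∈ localSupport S) : 0 < ∑ i ∈ S, a i := by
  by_contra! hle
  have hS := Nat.le_zero.1 hle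
  have hSc := (balanced_of_mem_localSupport ha).symm.trans hS
  rw [Finset.sum_eq_zero_iff] at hS hSc
  refine (mem_localSupport.1 ha).1 (Finsupp.ext fun i => ?_)
  by_cases hi : i ∈ S
  · exact hS i hi
  · exact hSc i (Finset.mem_compl.2 hi)

lemma sum_erase_pos_of_mem_localSupport (ha : a ∈ localSupport S) {i : ι} (hi : i ∈ S) :
    0 < ∑ j ∈ S.erase i, a j := by
  have hpos := sum_pos_of_mem_localSupport ha
  have hbal := balanced_of_mem_localSupport ha
  have hsum := Finset.add_sum_erase S a hi
  rw [← localSupport_compl, mem_localSupport] at ha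
  by_contra! hle
  exact ha.2 (coeff_localFactor_balanced_eq_zero (Finset.notMem_compl.2 hi) (by omega)
    (.inr (hbal.symm.trans_le (by omega))))

lemma two_le_sum_of_mem_localSupport (ha : a ∈ localSupport S) : 2 ≤ ∑ i ∈ S, a i := by
  obtain ⟨i, hi, hai⟩ :=
    Finset.exists_ne_zero_of_sum_ne_zero (sum_pos_of_mem_localSupport ha).ne'
  have hsum := Finset.add_sum_erase S a hi
  have hpos := sum_erase_pos_of_mem_localSupport ha hi
  omega

lemma two_le_sum_compl_of_mem_localSupport (ha : a ∈ localSupport S) : 2 ≤ ∑ i ∈ Sᶜ, a i :=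
  two_le_sum_of_mem_localSupport (localSupport_compl S ▸ ha)

lemma two_le_sum_compl_pair_of_mem_localSupport (ha : a ∈ localSupport S) {i j : ι} (hi : i ∈ S)
    (hj : j ∈ Sᶜ) : 2 ≤ ∑ l ∈ {i, j}ᶜ, a l := by
  have hunion : ({i, j}ᶜ : Finset ι) = S.erase i ∪ Sᶜ.erase j := by
    ext l
    simp only [Finset.mem_union, Finset.mem_erase, Finset.mem_compl, Finset.mem_insert,
      Finset.mem_singleton] at hj ⊢
    grind
  rw [hunion, Finset.sum_union (disjoint_compl_right.mono (S.erase_subset i) (Sᶜ.erase_subset j))]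
  have hpos := sum_erase_pos_of_mem_localSupport ha hi
  have hpos' := sum_erase_pos_of_mem_localSupport (localSupport_compl S ▸ ha) hj
  omega

lemma polyExpBounded_prod_expand_localFactor {F : Type*} [Field F] [Fintype F] {r : ℝ}
    (hr : 1 ≤ r) (hq : r ^ 2 = Fintype.card F) {U : Finset ι}
    (hU : ∀ a ∈ localSupport S, 2 ≤ ∑ i ∈ U, a i) (s : Finset (MonicPrime F)) :
    PolyExpBounded r U
      ((localSupport S).card * (2 ^ (S ×ˢ Sᶜ).card * Fintype.card ι + Fintype.card ι))
      (∏ P ∈ s, (localFactor S (balanced S)).expand P.1.natDegree P.natDegree_ne_zero) := by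
  refine .prod_expand hr hq ?_ (fun a _ => abs_coeff_localFactor_balanced_le S a) ?_ hU s
  · rw [coeff_zero_localFactor_balanced, abs_one]
  · exact fun n hn hns => by_contra fun h => hns (mem_localSupport.2 ⟨hn, h⟩)

omit [Fintype ι] [DecidableEq ι] in
lemma abs_coeff_indicatorSeries_le (A : Set (ι →₀ ℕ)) (n : ι →₀ ℕ) :
    |MvPowerSeries.coeff n (indicatorSeries A)| ≤ 1 := by
  classical
  rw [coeff_indicatorSeries]
  split_ifs <;> simp

omit [Fintype ι] [DecidableEq ι] in
lemma abs_coeff_one_sub_monomial_le {m : ι →₀ ℕ} (hm : m ≠ 0) (n : ι →₀ ℕ) :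
    |MvPowerSeries.coeff n (1 - MvPowerSeries.monomial m (1 : ℝ))| ≤ 1 := by
  classical
  rw [map_sub, MvPowerSeries.coeff_one, MvPowerSeries.coeff_monomial]
  split_ifs <;> simp_all

lemma polyExpBounded_localFactor {r : ℝ} (hr : 1 ≤ r) (U : Finset ι) (A : Set (ι →₀ ℕ)) :
    PolyExpBounded r U ((S ×ˢ Sᶜ).card * Fintype.card ι + Fintype.card ι) (localFactor S A) := by
  have hprod : PolyExpBounded r U _ _ := .prod hr fun x (_ : x ∈ S ×ˢ Sᶜ) =>
    .of_abs_coeff_le_one hr (abs_coeff_one_sub_monomial_le (pairDegree_ne_zero x))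
  simpa only [localFactor, zero_add, add_zero] using hprod.mul (zero_le_one.trans hr)
    (.of_abs_coeff_le_one hr (abs_coeff_indicatorSeries_le A))

end LocalFactor

section Truncation

open Finset.HasAntidiagonal

variable {σ τ : Type*} {n : σ →₀ ℕ}

lemma coeff_mul_congr {f f' g g' : MvPowerSeries σ ℝ}
    (hf : ∀ e ≤ n, MvPowerSeries.coeff e f = MvPowerSeries.coeff e f')
    (hg : ∀ e ≤ n, MvPowerSeries.coeff e g = MvPowerSeries.coeff e g') :
    MvPowerSeries.coeff n (f * g) = MvPowerSeries.coeff n (f' * g') := by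
  classical
  rw [MvPowerSeries.coeff_mul, MvPowerSeries.coeff_mul]
  refine Finset.sum_congr rfl fun p hp => ?_
  rw [hf _ (antidiagonal.fst_le hp),
    hg _ (antidiagonal.snd_le hp)]

lemma coeff_prod_congr {s : Finset τ} {f g : τ → MvPowerSeries σ ℝ}
    (h : ∀ i ∈ s, ∀ e ≤ n, MvPowerSeries.coeff e (f i) = MvPowerSeries.coeff e (g i)) :
    MvPowerSeries.coeff n (∏ i ∈ s, f i) = MvPowerSeries.coeff n (∏ i ∈ s, g i) := by
  classical
  rw [MvPowerSeries.coeff_prod, MvPowerSeries.coeff_prod]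
  refine Finset.sum_congr rfl fun l hl => Finset.prod_congr rfl fun i hi => h i hi _ ?_
  rw [← (Finset.mem_finsuppAntidiag.1 hl).1]
  exact Finset.single_le_sum (f := l) (fun _ _ => zero_le) hi

end Truncation

section DiagonalSeries

variable {k : ℕ} {S : Finset (Fin k)} {n : Fin k →₀ ℕ}

/-- The degrees `n` with the signs of `NS`: positive on `S` and negative outside. -/
def signed (S : Finset (Fin k)) (n : Fin k →₀ ℕ) (i : Fin k) : ℤ := if i ∈ S then n i else -n i

lemma forall_natDegree_eq_signed_iff {F : Type*} [Field F] {f : Fin k → F[X]} :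
    ((∀ i ∈ S, ((f i).natDegree : ℤ) = signed S n i) ∧
      ∀ i ∉ S, ((f i).natDegree : ℤ) = -signed S n i) ↔ ∀ i, (f i).natDegree = n i := by
  rw [← forall_and]
  refine forall_congr' fun i => ?_
  by_cases hi : i ∈ S <;> simp [signed, hi]

variable (F : Type) [Field F]

/-- The generating series of the diagonal counts `NS`, in the variables attached to the degrees. -/
def diagonalSeries (S : Finset (Fin k)) : MvPowerSeries (Fin k) ℝ := fun n => NS F S (signed S n)

lemma coeff_diagonalSeries (S : Finset (Fin k)) (n : Fin k →₀ ℕ) :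
    MvPowerSeries.coeff n (diagonalSeries F S) = NS F S (signed S n) := rfl

variable {F}

lemma exists_X_pow_mul_eq_iff [Finite F] {g h : F[X]} (hg : g.Monic) (hh : h.Monic) :
    (∃ a b : ℕ, X ^ a * g = X ^ b * h) ↔
      ∀ P ≠ MonicPrime.primeX F, P.exponent g = P.exponent h := by
  classical
  have hexp {f : F[X]} (hf : f.Monic) (P : MonicPrime F) (a : ℕ) :
      P.exponent (X ^ a * f) = a * (if P = MonicPrime.primeX F then 1 else 0) + P.exponent f := by
    rw [P.exponent_mul (pow_ne_zero _ X_ne_zero) hf.ne_zero, P.exponent_pow,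
      ← P.exponent_coe (MonicPrime.primeX F)]
    rfl
  constructor
  · rintro ⟨a, b, hab⟩ P hP
    simpa [hexp hg, hexp hh, hP] using congrArg P.exponent hab
  · intro hne
    refine ⟨(MonicPrime.primeX F).exponent h, (MonicPrime.primeX F).exponent g,
      MonicPrime.ext_exponent ((monic_X_pow _).mul hg) ((monic_X_pow _).mul hh) fun P => ?_⟩
    rw [hexp hg, hexp hh]
    split_ifs with hP
    · rw [hP, mul_one, mul_one, add_comm]
    · rw [hne P hP, mul_zero, mul_zero]

open scoped Classical in
/-- The exponents allowed by the diagonal condition at a prime: arbitrary ones at `T`, balanced ones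
elsewhere. -/
def diagonalExponents (S : Finset (Fin k)) (P : MonicPrime F) : Set (Fin k →₀ ℕ) :=
  if P = MonicPrime.primeX F then Set.univ else balanced S

lemma exponents_mem_diagonalExponents_iff [Finite F] {f : Fin k → F[X]} (hf : ∀ i, (f i).Monic) :
    (∀ P : MonicPrime F, P.exponents f ∈ diagonalExponents S P) ↔
      ∃ a b : ℕ, X ^ a * ∏ i ∈ S, f i = X ^ b * ∏ i ∈ Sᶜ, f i := by
  rw [exists_X_pow_mul_eq_iff (monic_prod_of_monic _ _ fun i _ => hf i)
    (monic_prod_of_monic _ _ fun i _ => hf i)]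
  refine forall_congr' fun P => ?_
  rw [P.exponent_prod fun i _ => (hf i).ne_zero, P.exponent_prod fun i _ => (hf i).ne_zero,
    diagonalExponents]
  split_ifs with hP <;> simp [hP, balanced]

theorem coeff_diagonalSeries_eq_coeff_prod [Finite F] {M : ℕ} (hM : ∀ i, n i ≤ M) :
    MvPowerSeries.coeff n (diagonalSeries F S) =
      MvPowerSeries.coeff n (∏ P ∈ MonicPrime.ofDegreeLE F M,
        (indicatorSeries (diagonalExponents S P)).expand P.1.natDegree P.natDegree_ne_zero) := by
  rw [coeff_diagonalSeries, coeff_prod_expand_indicatorSeries, NS]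
  congr 2
  ext f
  simp only [eulerSet, Set.mem_ofPred_eq]
  refine and_congr_right fun hf => ?_
  rw [← and_assoc, forall_natDegree_eq_signed_iff]
  refine and_congr_right fun hdeg => ?_
  have hlarge (P) (hP : P ∉ MonicPrime.ofDegreeLE F M) : P.exponents f = 0 :=
    Finsupp.ext fun i => MonicPrime.exponent_eq_zero_of_natDegree_lt (hf i)
      (((hdeg i).trans_le (hM i)).trans_lt (not_le.1 (mt MonicPrime.mem_ofDegreeLE.2 hP)))
  rw [← exponents_mem_diagonalExponents_iff hf]
  refine ⟨fun h => ⟨hlarge, fun P _ => h P⟩, fun h P => ?_⟩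
  by_cases hP : P ∈ MonicPrime.ofDegreeLE F M
  · exact h.2 P hP
  · rw [hlarge P hP, diagonalExponents]
    split_ifs <;> simp [balanced]

end DiagonalSeries

section TwistedSeries

variable {k : ℕ} {S : Finset (Fin k)} (F : Type) [Field F] [Fintype F]

/-- The diagonal series multiplied by `∏_{i ∈ S, j ∉ S} (1 - q x_i x_j)`. Up to powers of `√q`, its
coefficients are the values of `bS`. -/
def twistedSeries (S : Finset (Fin k)) : MvPowerSeries (Fin k) ℝ :=
  (∏ x ∈ S ×ˢ Sᶜ, (1 - MvPowerSeries.monomial (pairDegree x) (Fintype.card F : ℝ))) *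
    diagonalSeries F S

lemma expand_localFactor {ι : Type*} [Fintype ι] [DecidableEq ι] (S : Finset ι)
    (A : Set (ι →₀ ℕ)) {p : ℕ} (hp : p ≠ 0) :
    (localFactor S A).expand p hp =
      (∏ x ∈ S ×ˢ Sᶜ, (1 - MvPowerSeries.monomial (p • pairDegree x) (1 : ℝ))) *
        (indicatorSeries A).expand p hp := by
  simp [localFactor, map_mul, map_prod]

variable {F}

theorem coeff_twistedSeries_eq_coeff_prod {n : Fin k →₀ ℕ} {M : ℕ} (hM : n.degree ≤ M) :
    MvPowerSeries.coeff n (twistedSeries F S) =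
      MvPowerSeries.coeff n (∏ P ∈ MonicPrime.ofDegreeLE F M,
        (localFactor S (diagonalExponents S P)).expand P.1.natDegree P.natDegree_ne_zero) := by
  simp only [expand_localFactor]
  rw [Finset.prod_mul_distrib, Finset.prod_comm]
  refine coeff_mul_congr (fun e he => coeff_prod_congr fun x _ e' he' => ?_) fun e he =>
    coeff_diagonalSeries_eq_coeff_prod fun i =>
      (Finsupp.le_degree i e).trans ((Finsupp.degree_mono he).trans hM)
  refine (coeff_prod_one_sub_monomial fun hle => ?_).symm
  refine absurd ((hle.trans (he'.trans he)) x.1) (not_le.2 ?_)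
  calc n x.1 < M + 1 := Nat.lt_succ_of_le ((Finsupp.le_degree x.1 n).trans hM)
    _ ≤ (M + 1) * pairDegree x x.1 := Nat.le_mul_of_pos_right _ (by simp [pairDegree])

/-- The exponent of the polynomial factor in the bounds for `twistedSeries`. -/
def twistedExponent (S : Finset (Fin k)) : ℕ :=
  ((S ×ˢ Sᶜ).card + (localSupport S).card * (2 ^ (S ×ˢ Sᶜ).card + 1) + 2) * k

theorem polyExpBounded_twistedSeries {r : ℝ} (hr : 1 ≤ r) (hq : r ^ 2 = Fintype.card F)
    {U : Finset (Fin k)} (hU : ∀ a ∈ localSupport S, 2 ≤ ∑ i ∈ U, a i) :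
    PolyExpBounded r U (twistedExponent S) (twistedSeries F S) := by
  classical
  intro n
  have hX : MonicPrime.primeX F ∈ MonicPrime.ofDegreeLE F (n.degree + 1) := by
    simp [MonicPrime.mem_ofDegreeLE, MonicPrime.primeX]
  rw [coeff_twistedSeries_eq_coeff_prod (Nat.le_succ _), ← Finset.mul_prod_erase _ _ hX]
  have hone (f : MvPowerSeries (Fin k) ℝ) : f.expand (MonicPrime.primeX F).1.natDegree
      (MonicPrime.primeX F).natDegree_ne_zero = f := by
    simp only [MonicPrime.primeX, natDegree_X, MvPowerSeries.expand_one_apply]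
  rw [hone, Finset.prod_congr rfl fun P hP => by
    rw [diagonalExponents, if_neg (Finset.ne_of_mem_erase hP)]]
  have hr' : 0 ≤ r := zero_le_one.trans hr
  refine ((polyExpBounded_localFactor hr U _).mul hr'
    (polyExpBounded_prod_expand_localFactor hr hq hU _)).mono hr' (le_of_eq ?_) n
  rw [twistedExponent, Fintype.card_fin]
  ring

end TwistedSeries

section Coefficients

variable {F : Type} [Field F] {k : ℕ} {S : Finset (Fin k)} {d : Fin k → ℤ}

lemma exists_eq_signed (hS : ∀ i ∈ S, 0 ≤ d i) (hSc : ∀ i ∉ S, d i ≤ 0) :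
    ∃ n : Fin k →₀ ℕ, d = signed S n := by
  refine ⟨Finsupp.equivFunOnFinite.symm fun i => (d i).natAbs, funext fun i => ?_⟩
  rw [signed, Finsupp.equivFunOnFinite_symm_apply_apply]
  split_ifs with hi
  · exact (Int.natAbs_of_nonneg (hS i hi)).symm
  · rw [Int.ofNat_natAbs_of_nonpos (hSc i hi), neg_neg]

lemma NS_eq_zero (hd : (∃ i ∈ S, d i < 0) ∨ ∃ i ∉ S, 0 < d i) : NS F S d = 0 := by
  refine (congrArg Set.ncard (Set.eq_empty_of_forall_notMem ?_)).trans (Set.ncard_empty _)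
  rintro f ⟨_, hf, hf', _⟩
  rcases hd with ⟨i, hi, hlt⟩ | ⟨i, hi, hlt⟩
  · have := hf i hi
    omega
  · have := hf' i hi
    omega

lemma sum_signed (n : Fin k →₀ ℕ) : ∑ i ∈ S, signed S n i = (∑ i ∈ S, n i : ℕ) := by
  rw [Nat.cast_sum]
  exact Finset.sum_congr rfl fun i hi => if_pos hi

lemma sum_compl_signed (n : Fin k →₀ ℕ) : ∑ i ∈ Sᶜ, signed S n i = -(∑ i ∈ Sᶜ, n i : ℕ) := by
  rw [Nat.cast_sum, ← Finset.sum_neg_distrib]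
  exact Finset.sum_congr rfl fun i hi => if_neg (Finset.mem_compl.1 hi)

lemma degree_eq_sum_add_sum_compl {ι : Type*} [Fintype ι] [DecidableEq ι] (U : Finset ι)
    (n : ι →₀ ℕ) :
    n.degree = ∑ i ∈ U, n i + ∑ i ∈ Uᶜ, n i := by
  rw [Finsupp.degree_eq_sum, Finset.sum_add_sum_compl]

lemma sum_signed_sub_sum_compl_signed (n : Fin k →₀ ℕ) :
    ∑ i ∈ S, signed S n i - ∑ i ∈ Sᶜ, signed S n i = n.degree := by
  rw [sum_signed, sum_compl_signed, degree_eq_sum_add_sum_compl S, Nat.cast_add, sub_neg_eq_add]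

lemma vJ_eq_signed_graphDegree {J : Finset (Fin k × Fin k)} (hJ : J ⊆ S ×ˢ Sᶜ) :
    vJ S J = signed S (graphDegree J) := by
  ext i
  rw [vJ, signed]
  split_ifs with hi
  · rw [graphDegree_apply_of_mem hJ hi]
  · rw [graphDegree_apply_of_notMem hJ hi]

lemma signed_tsub {n m : Fin k →₀ ℕ} (h : m ≤ n) (i : Fin k) :
    signed S (n - m) i = signed S n i - signed S m i := by
  have := h i
  simp only [signed, Finsupp.tsub_apply]
  split_ifs <;> omega

variable [Fintype F]

lemma bS_eq_zero (hd : (∃ i ∈ S, d i < 0) ∨ ∃ i ∉ S, 0 < d i) : bS F S d = 0 := by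
  refine Finset.sum_eq_zero fun J _ => ?_
  rw [wS, NS_eq_zero, Nat.cast_zero, mul_zero, mul_zero]
  refine hd.imp (fun ⟨i, hi, hlt⟩ => ⟨i, hi, ?_⟩) fun ⟨i, hi, hlt⟩ => ⟨i, hi, ?_⟩
  · rw [vJ, if_pos hi]
    omega
  · rw [vJ, if_neg hi]
    omega

lemma wS_signed (n : Fin k →₀ ℕ) :
    wS F S (signed S n) =
      (Fintype.card F : ℝ) ^ (-(n.degree : ℝ) / 2) * NS F S (signed S n) := by
  rw [wS, sum_signed_sub_sum_compl_signed, Int.cast_natCast]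

lemma wS_signed_sub_vJ {J : Finset (Fin k × Fin k)} (hJ : J ⊆ S ×ˢ Sᶜ) {n : Fin k →₀ ℕ}
    (hle : graphDegree J ≤ n) :
    wS F S (fun i => signed S n i - vJ S J i) =
      (Fintype.card F : ℝ) ^ (-(n.degree : ℝ) / 2) * (Fintype.card F : ℝ) ^ J.card *
        NS F S (signed S (n - graphDegree J)) := by
  have hq : (0 : ℝ) < Fintype.card F := Nat.cast_pos.2 Fintype.card_pos
  have hsigned : (fun i => signed S n i - vJ S J i) = signed S (n - graphDegree J) :=
    funext fun i => by rw [signed_tsub hle, vJ_eq_signed_graphDegree hJ]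
  have hdegree : (n.degree : ℝ) = (n - graphDegree J).degree + 2 * J.card := by
    conv_lhs => rw [← tsub_add_cancel_of_le hle]
    rw [map_add, degree_eq_sum_add_sum_compl S (graphDegree J), sum_graphDegree hJ,
      sum_compl_graphDegree hJ, ← two_mul]
    push_cast
    rfl
  rw [hsigned, wS_signed, ← Real.rpow_natCast, ← Real.rpow_add hq, hdegree]
  ring_nf

lemma wS_signed_sub_vJ_eq_zero {J : Finset (Fin k × Fin k)} (hJ : J ⊆ S ×ˢ Sᶜ) {n : Fin k →₀ ℕ}
    (hle : ¬ graphDegree J ≤ n) : wS F S (fun i => signed S n i - vJ S J i) = 0 := by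
  obtain ⟨i, hi⟩ : ∃ i, n i < graphDegree J i := by
    simpa only [Finsupp.le_def, not_forall, not_le] using hle
  rw [wS, NS_eq_zero, Nat.cast_zero, mul_zero]
  rw [vJ_eq_signed_graphDegree hJ]
  by_cases hiS : i ∈ S
  · exact .inl ⟨i, hiS, by simp only [signed, if_pos hiS]; omega⟩
  · exact .inr ⟨i, hiS, by simp only [signed, if_neg hiS]; omega⟩

theorem bS_signed (n : Fin k →₀ ℕ) :
    bS F S (signed S n) = (Fintype.card F : ℝ) ^ (-(n.degree : ℝ) / 2) *
      MvPowerSeries.coeff n (twistedSeries F S) := by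
  classical
  rw [bS, twistedSeries, coeff_prod_one_sub_monomial_pairDegree_mul, Finset.mul_sum]
  refine Finset.sum_congr rfl fun J hJ => ?_
  rw [Finset.mem_powerset] at hJ
  split_ifs with hle
  · rw [wS_signed_sub_vJ hJ hle, coeff_diagonalSeries, neg_pow (Fintype.card F : ℝ)]
    ring
  · rw [wS_signed_sub_vJ_eq_zero hJ hle, mul_zero, mul_zero]

lemma abs_bS_signed_le_of_localSupport {U : Finset (Fin k)}
    (hU : ∀ a ∈ localSupport S, 2 ≤ ∑ i ∈ U, a i) (n : Fin k →₀ ℕ) :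
    |bS F S (signed S n)| ≤ (1 + (n.degree : ℝ)) ^ twistedExponent S *
      (Fintype.card F : ℝ) ^ (-((∑ i ∈ Uᶜ, n i : ℕ) : ℝ) / 2) := by
  have hq : (1 : ℝ) ≤ Fintype.card F := by exact_mod_cast Fintype.card_pos
  have hq' : (0 : ℝ) < Fintype.card F := by positivity
  have hbound := polyExpBounded_twistedSeries (Real.one_le_sqrt.2 hq) (Real.sq_sqrt hq'.le) hU n
  have hexp : (Fintype.card F : ℝ) ^ (-(n.degree : ℝ) / 2) * √(Fintype.card F) ^ (∑ i ∈ U, n i) =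
      (Fintype.card F : ℝ) ^ (-((∑ i ∈ Uᶜ, n i : ℕ) : ℝ) / 2) := by
    rw [Real.sqrt_eq_rpow, ← Real.rpow_mul_natCast hq'.le, ← Real.rpow_add hq',
      degree_eq_sum_add_sum_compl U]
    congr 1
    push_cast
    ring
  rw [bS_signed, abs_mul, abs_of_nonneg (Real.rpow_nonneg hq'.le _), ← hexp, mul_left_comm]
  exact mul_le_mul_of_nonneg_left hbound (Real.rpow_nonneg hq'.le _)

variable (S) in
lemma abs_bS_signed_le_sum (n : Fin k →₀ ℕ) :
    |bS F S (signed S n)| ≤ (1 + (n.degree : ℝ)) ^ twistedExponent S *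
      (Fintype.card F : ℝ) ^ (((-∑ i ∈ S, signed S n i : ℤ) : ℝ) / 2) := by
  have h := abs_bS_signed_le_of_localSupport (F := F) (U := Sᶜ)
    (fun a ha => two_le_sum_compl_of_mem_localSupport ha) n
  rwa [compl_compl, ← Int.cast_natCast (∑ i ∈ S, n i), ← sum_signed, ← Int.cast_neg] at h

variable (S) in
lemma abs_bS_signed_le_sum_compl (n : Fin k →₀ ℕ) :
    |bS F S (signed S n)| ≤ (1 + (n.degree : ℝ)) ^ twistedExponent S *
      (Fintype.card F : ℝ) ^ (((∑ i ∈ Sᶜ, signed S n i : ℤ) : ℝ) / 2) := by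
  have h := abs_bS_signed_le_of_localSupport (F := F) (U := S)
    (fun a ha => two_le_sum_of_mem_localSupport ha) n
  rwa [← Int.cast_natCast (∑ i ∈ Sᶜ, n i), ← Int.cast_neg, ← sum_compl_signed] at h

variable (S) in
lemma abs_bS_signed_le_sup_inf (hS : S.Nonempty) (hSc : Sᶜ.Nonempty) (n : Fin k →₀ ℕ) :
    |bS F S (signed S n)| ≤ (1 + (n.degree : ℝ)) ^ twistedExponent S *
      (Fintype.card F : ℝ) ^
        (((-S.sup' hS (signed S n) + Sᶜ.inf' hSc (signed S n) : ℤ) : ℝ) / 2) := by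
  obtain ⟨i, hi, hsup⟩ := Finset.exists_mem_eq_sup' hS (signed S n)
  obtain ⟨j, hj, hinf⟩ := Finset.exists_mem_eq_inf' hSc (signed S n)
  have hij : i ≠ j := fun h => Finset.mem_compl.1 hj (h ▸ hi)
  have h := abs_bS_signed_le_of_localSupport (F := F) (U := {i, j}ᶜ)
    (fun a ha => two_le_sum_compl_pair_of_mem_localSupport ha hi hj) n
  rw [compl_compl, Finset.sum_pair hij] at h
  rw [hsup, hinf, signed, signed, if_pos hi, if_neg (Finset.mem_compl.1 hj), ← neg_add]
  exact_mod_cast h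

theorem abs_bS_signed_le (hS : S.Nonempty) (hSc : Sᶜ.Nonempty) (n : Fin k →₀ ℕ) :
    |bS F S (signed S n)| ≤ (1 + (n.degree : ℝ)) ^ twistedExponent S *
      min
        (min ((Fintype.card F : ℝ) ^
            (((-S.sup' hS (signed S n) + Sᶜ.inf' hSc (signed S n) : ℤ) : ℝ) / 2))
          ((Fintype.card F : ℝ) ^ (((-∑ i ∈ S, signed S n i : ℤ) : ℝ) / 2)))
        (min ((Fintype.card F : ℝ) ^ (((∑ i ∈ Sᶜ, signed S n i : ℤ) : ℝ) / 2))
          ((Fintype.card F : ℝ) ^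
            (-|((∑ i ∈ S, signed S n i + ∑ i ∈ Sᶜ, signed S n i : ℤ) : ℝ)| / 2))) := by
  have hq : (1 : ℝ) ≤ Fintype.card F := by exact_mod_cast Fintype.card_pos
  have hpoly : (0 : ℝ) ≤ (1 + (n.degree : ℝ)) ^ twistedExponent S := by positivity
  simp only [mul_min_of_nonneg _ _ hpoly]
  have hsum := abs_bS_signed_le_sum (F := F) S n
  have hsum_compl := abs_bS_signed_le_sum_compl (F := F) S n
  refine le_min (le_min (abs_bS_signed_le_sup_inf S hS hSc n) hsum) (le_min hsum_compl ?_)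
  have hA : 0 ≤ ∑ i ∈ S, signed S n i := sum_signed n ▸ Int.natCast_nonneg _
  have hB : ∑ i ∈ Sᶜ, signed S n i ≤ 0 := by
    rw [sum_compl_signed]
    exact neg_nonpos.2 (Int.natCast_nonneg _)
  rcases le_total 0 (∑ i ∈ S, signed S n i + ∑ i ∈ Sᶜ, signed S n i) with h | h
  · refine hsum.trans (mul_le_mul_of_nonneg_left
      (Real.rpow_le_rpow_of_exponent_le hq (div_le_div_of_nonneg_right ?_ two_pos.le)) hpoly)
    rw [abs_of_nonneg (by exact_mod_cast h)]
    exact_mod_cast (by omega)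
  · refine hsum_compl.trans (mul_le_mul_of_nonneg_left
      (Real.rpow_le_rpow_of_exponent_le hq (div_le_div_of_nonneg_right ?_ two_pos.le)) hpoly)
    rw [abs_of_nonpos (by exact_mod_cast h), neg_neg]
    exact_mod_cast (by omega)

end Coefficients


/-- the bound on the coefficients `b(d)` of the Euler-product-regularized
diagonal sum, with constants `C, K` depending only on `k`, together with the vanishing
of `b(d)` for `∑_{i∈S} d_i - ∑_{i∉S} d_i < 0`. -/
theorem statement10 (k : ℕ) (hk : 1 ≤ k) :
    ∃ C K : ℝ, 0 < C ∧ 0 < K ∧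
      ∀ (F : Type) [Field F] [Fintype F],
      ∀ (S : Finset (Fin k)) (hS : S.Nonempty) (hSc : Sᶜ.Nonempty) (d : Fin k → ℤ),
        ((0 : ℤ) ≤ (∑ i ∈ S, d i) - ∑ i ∈ Sᶜ, d i →
          |bS F S d| ≤ C *
            (((1 + ((∑ i ∈ S, d i) - ∑ i ∈ Sᶜ, d i) : ℤ)) : ℝ) ^ K *
            min
              (min ((Fintype.card F : ℝ) ^
                      ((((-(S.sup' hS d) + Sᶜ.inf' hSc d : ℤ)) : ℝ) / 2))
                   ((Fintype.card F : ℝ) ^ ((-(((∑ i ∈ S, d i : ℤ)) : ℝ)) / 2)))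
              (min ((Fintype.card F : ℝ) ^ (((((∑ i ∈ Sᶜ, d i : ℤ))) : ℝ) / 2))
                   ((Fintype.card F : ℝ) ^
                      (-|((((∑ i ∈ S, d i) + ∑ i ∈ Sᶜ, d i : ℤ)) : ℝ)| / 2)))) ∧
        ((∑ i ∈ S, d i) - ∑ i ∈ Sᶜ, d i < 0 → bS F S d = 0) := by
  refine ⟨1, ((∑ S : Finset (Fin k), twistedExponent S + 1 : ℕ) : ℝ), one_pos, by positivity, ?_⟩
  intro F _ _ S hS hSc d
  by_cases hd : (∃ i ∈ S, d i < 0) ∨ ∃ i ∉ S, 0 < d i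
  · refine ⟨fun hnonneg => ?_, fun _ => bS_eq_zero hd⟩
    rw [bS_eq_zero hd, abs_zero, Real.rpow_natCast]
    have : (0 : ℝ) ≤ (1 + (∑ i ∈ S, d i - ∑ i ∈ Sᶜ, d i) : ℤ) := Int.cast_nonneg (by omega)
    positivity
  · push Not at hd
    obtain ⟨n, rfl⟩ := exists_eq_signed hd.1 hd.2
    have hK : twistedExponent S ≤ ∑ S : Finset (Fin k), twistedExponent S + 1 :=
      Nat.le_succ_of_le (Finset.single_le_sum (fun _ _ => zero_le) (Finset.mem_univ S))
    rw [sum_signed_sub_sum_compl_signed]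
    refine ⟨fun _ => (abs_bS_signed_le hS hSc n).trans ?_, fun h => absurd h (by omega)⟩
    rw [one_mul, Real.rpow_natCast]
    push_cast
    gcongr
    linarith [n.degree.cast_nonneg (α := ℝ)]

end
end
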